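/- arXiv:1803.03369 — 2 statements merged into one kernel-verified Lean document; each statement's English description precedes it below -/
import Mathlib

section
/- Let n ≥ 1 be an integer and let α > 0. Then there exists a constant C > 0 such that for every Schwartz function f on ℝⁿ, ‖ sup_{R>0} |S_R^α f| ‖_{L²(ℝⁿ)} ≤ C ‖f‖_{L²(ℝⁿ)}, where S_R^α f(x) = ∫_{ℝⁿ} (1 − |ξ|²/R²)₊^α f̂(ξ) e^{2πi⟨x,ξ⟩} dξ. -/
open MeasureTheory Complex Filter
open scoped FourierTransform RealInnerProductSpace ENNReal Topology

/-- The Bochner–Riesz mean of order `α` at level `R` of a function `f` on `ℝⁿ`: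
`S_R^α f(x) = ∫ (1 - |ξ|²/R²)₊^α f̂(ξ) e^{2πi⟨x,ξ⟩} dξ`. -/
noncomputable def bochnerRiesz (n : ℕ) (α R : ℝ) (f : EuclideanSpace ℝ (Fin n) → ℂ)
    (x : EuclideanSpace ℝ (Fin n)) : ℂ :=
  ∫ ξ : EuclideanSpace ℝ (Fin n),
    (((max (1 - ‖ξ‖ ^ 2 / R ^ 2) 0) ^ (α : ℝ) : ℝ) : ℂ) * 𝓕 f ξ *
      Complex.exp (2 * Real.pi * Complex.I * (⟪x, ξ⟫ : ℝ))

/-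
With `u = R²` the means have Fourier multipliers `(1 - ‖ξ‖² / u)₊ ^ α`. Put `p = q = (α + 1) / 2`.
A beta integral writes `(1 - s)₊ ^ α` as the average of `ρ (s / r)` against the beta density
`B (p, q)` in `r`, where `ρ s = (1 - s)₊ ^ (p - 1)` may be unbounded but is square-integrable.
Split `ρ s = (ρ s - exp (-s)) + exp (-s)`. The difference vanishes to first order at `0` and is
square-integrable for `ds / s`, so Cauchy–Schwarz in `r` bounds its contribution, for every `u` at
once, by a square function that is bounded on `L²` by Plancherel. The exponential contributes at
most the maximal function of the heat semigroup, whose `L²` bound follows from the semigroup law by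
duality and linearisation of the supremum.
-/

lemma le_of_sq_le_mul_self {a b : ℝ≥0∞} (h : a ^ 2 ≤ b * a) (hab : b ≠ 0 → b ≠ ∞ → a ≠ ∞) :
    a ≤ b := by
  rcases eq_or_ne b 0 with rfl | hb₀
  · simpa using h
  rcases eq_or_ne b ∞ with rfl | hb
  · exact le_top
  rcases eq_or_ne a 0 with rfl | ha₀
  · exact zero_le
  rwa [sq, ENNReal.mul_le_mul_iff_left ha₀ (hab hb₀ hb)] at h

lemma add_sq_le_two_mul_sq_add_sq (a b : ℝ≥0∞) : (a + b) ^ 2 ≤ 2 * (a ^ 2 + b ^ 2) := by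
  have h := ENNReal.rpow_add_le_mul_rpow_add_rpow a b one_le_two
  rwa [show (2 : ℝ) - 1 = 1 by norm_num, ENNReal.rpow_one, ENNReal.rpow_ofNat, ENNReal.rpow_ofNat,
    ENNReal.rpow_ofNat] at h

section Maximal

variable {X ι κ : Type*} [MeasurableSpace X] {μ : Measure X}

lemma lintegral_mul_sq_le {f g : X → ℝ≥0∞} (hf : AEMeasurable f μ) (hg : AEMeasurable g μ) :
    (∫⁻ x, f x * g x ∂μ) ^ 2 ≤ (∫⁻ x, f x ^ 2 ∂μ) * ∫⁻ x, g x ^ 2 ∂μ := by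
  have hölder := ENNReal.lintegral_mul_le_Lp_mul_Lq μ Real.HolderConjugate.two_two hf hg
  simp only [Pi.mul_apply, ENNReal.rpow_two] at hölder
  calc (∫⁻ x, f x * g x ∂μ) ^ 2
      ≤ ((∫⁻ x, f x ^ 2 ∂μ) ^ (1 / 2 : ℝ) * (∫⁻ x, g x ^ 2 ∂μ) ^ (1 / 2 : ℝ)) ^ 2 := by gcongr
    _ = (∫⁻ x, f x ^ 2 ∂μ) * ∫⁻ x, g x ^ 2 ∂μ := by
      simp only [mul_pow, ← ENNReal.rpow_two, ← ENNReal.rpow_mul]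
      norm_num

/-- The positive integral operator `h ↦ ∫ p(·, y) h(y) dμ(y)` with kernel `p`. -/
noncomputable def kernelOp (μ : Measure X) (p : X → X → ℝ≥0∞) (h : X → ℝ≥0∞) (x : X) : ℝ≥0∞ :=
  ∫⁻ y, p x y * h y ∂μ

section KernelOp

variable {p q : X → X → ℝ≥0∞} {a b h : X → ℝ≥0∞}

lemma kernelOp_sq_le (hp : Measurable (Function.uncurry p)) (hone : ∀ x, ∫⁻ y, p x y ∂μ ≤ 1)
    (hh : Measurable h) (x : X) :
    kernelOp μ p h x ^ 2 ≤ kernelOp μ p (fun y ↦ h y ^ 2) x := by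
  have hpx : Measurable (p x) := hp.of_uncurry_left
  have hsqrt : ∀ c : ℝ≥0∞, c ^ (1 / 2 : ℝ) * c ^ (1 / 2 : ℝ) = c := fun c ↦ by
    rw [← ENNReal.rpow_add_of_nonneg _ _ (by norm_num) (by norm_num), add_halves, ENNReal.rpow_one]
  calc kernelOp μ p h x ^ 2
      = (∫⁻ y, p x y ^ (1 / 2 : ℝ) * (p x y ^ (1 / 2 : ℝ) * h y) ∂μ) ^ 2 := by
        simp only [kernelOp, ← mul_assoc, hsqrt]
    _ ≤ (∫⁻ y, (p x y ^ (1 / 2 : ℝ)) ^ 2 ∂μ) * ∫⁻ y, (p x y ^ (1 / 2 : ℝ) * h y) ^ 2 ∂μ :=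
        lintegral_mul_sq_le (by fun_prop) (by fun_prop)
    _ = (∫⁻ y, p x y ∂μ) * kernelOp μ p (fun y ↦ h y ^ 2) x := by
        simp only [mul_pow, sq (_ ^ (1 / 2 : ℝ)), hsqrt, kernelOp]
    _ ≤ kernelOp μ p (fun y ↦ h y ^ 2) x := mul_le_of_le_one_left' (hone x)

variable [SFinite μ]

@[fun_prop]
lemma measurable_kernelOp (hp : Measurable (Function.uncurry p)) (hh : Measurable h) :
    Measurable (kernelOp μ p h) :=
  (hp.mul (hh.comp measurable_snd)).lintegral_prod_right'

lemma lintegral_kernelOp_mul (hp : Measurable (Function.uncurry p)) (hsymm : ∀ x y, p x y = p y x)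
    (ha : Measurable a) (hb : Measurable b) :
    ∫⁻ x, kernelOp μ p a x * b x ∂μ = ∫⁻ x, a x * kernelOp μ p b x ∂μ := by
  have hmeas : Measurable fun z : X × X ↦ p z.1 z.2 * a z.2 * b z.1 :=
    (hp.mul (ha.comp measurable_snd)).mul (hb.comp measurable_fst)
  calc ∫⁻ x, kernelOp μ p a x * b x ∂μ
      = ∫⁻ x, ∫⁻ y, p x y * a y * b x ∂μ ∂μ := lintegral_congr fun x ↦
        (lintegral_mul_const _ (hp.of_uncurry_left.mul ha)).symm
    _ = ∫⁻ y, ∫⁻ x, a y * (p y x * b x) ∂μ ∂μ := by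
      rw [lintegral_lintegral_swap hmeas.aemeasurable]
      refine lintegral_congr fun y ↦ lintegral_congr fun x ↦ ?_
      rw [hsymm x y]
      ring
    _ = ∫⁻ y, a y * kernelOp μ p b y ∂μ := lintegral_congr fun y ↦
        lintegral_const_mul _ (hp.of_uncurry_left.mul hb)

lemma kernelOp_kernelOp (hp : Measurable (Function.uncurry p))
    (hq : Measurable (Function.uncurry q)) (hh : Measurable h) (x : X) :
    kernelOp μ p (kernelOp μ q h) x = kernelOp μ (fun x z ↦ ∫⁻ y, p x y * q y z ∂μ) h x := by
  have hmeas : Measurable fun z : X × X ↦ p x z.1 * (q z.1 z.2 * h z.2) :=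
    (hp.of_uncurry_left.comp measurable_fst).mul (hq.mul (hh.comp measurable_snd))
  calc kernelOp μ p (kernelOp μ q h) x
      = ∫⁻ y, ∫⁻ z, p x y * (q y z * h z) ∂μ ∂μ := lintegral_congr fun y ↦
        (lintegral_const_mul _ (hq.of_uncurry_left.mul hh)).symm
    _ = ∫⁻ z, ∫⁻ y, p x y * q y z * h z ∂μ ∂μ := by
      rw [lintegral_lintegral_swap hmeas.aemeasurable]
      simp only [mul_assoc]
    _ = kernelOp μ (fun x z ↦ ∫⁻ y, p x y * q y z ∂μ) h x := lintegral_congr fun z ↦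
        lintegral_mul_const _ (hp.of_uncurry_left.mul hq.of_uncurry_right)

lemma lintegral_kernelOp_sq_le (hp : Measurable (Function.uncurry p))
    (hsymm : ∀ x y, p x y = p y x) (hone : ∀ x, ∫⁻ y, p x y ∂μ ≤ 1) (hh : Measurable h) :
    ∫⁻ x, kernelOp μ p h x ^ 2 ∂μ ≤ ∫⁻ x, h x ^ 2 ∂μ :=
  calc ∫⁻ x, kernelOp μ p h x ^ 2 ∂μ
      ≤ ∫⁻ x, kernelOp μ p (fun y ↦ h y ^ 2) x * 1 ∂μ := by
        simpa only [mul_one] using lintegral_mono (kernelOp_sq_le hp hone hh)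
    _ = ∫⁻ x, h x ^ 2 * kernelOp μ p (fun _ ↦ 1) x ∂μ :=
        lintegral_kernelOp_mul hp hsymm (hh.pow_const 2) measurable_const
    _ ≤ ∫⁻ x, h x ^ 2 ∂μ := lintegral_mono fun x ↦
        mul_le_of_le_one_right' (by simpa only [kernelOp, mul_one] using hone x)

end KernelOp

/-- A family of symmetric sub-Markovian kernels in which the composition of the `i`-th and the
`j`-th operator is at most `C` times the sum of the operators with indices `σ i` and `σ j`. The
model case is the heat semigroup sampled at dyadic times, where `σ` doubles the time. -/
structure IsDominatedKernelFamily (μ : Measure X) (p : ι → X → X → ℝ≥0∞) (σ : ι → ι)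
    (C : ℝ≥0∞) : Prop where
  measurable : ∀ i, Measurable (Function.uncurry (p i))
  symm : ∀ i x y, p i x y = p i y x
  lintegral_le_one : ∀ i x, ∫⁻ y, p i x y ∂μ ≤ 1
  lintegral_mul_le : ∀ i j x z, ∫⁻ y, p i x y * p j y z ∂μ ≤ C * (p (σ i) x z + p (σ j) x z)

namespace IsDominatedKernelFamily

variable [SFinite μ] {p : ι → X → X → ℝ≥0∞} {σ : ι → ι} {C : ℝ≥0∞}

@[fun_prop]
lemma measurable_kernelOp (hp : IsDominatedKernelFamily μ p σ C) (i : ι) {h : X → ℝ≥0∞}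
    (hh : Measurable h) : Measurable (kernelOp μ (p i) h) :=
  _root_.measurable_kernelOp (hp.measurable i) hh

lemma lintegral_kernelOp_mul_kernelOp_le (hp : IsDominatedKernelFamily μ p σ C) (i j : ι)
    {a b : X → ℝ≥0∞} (ha : Measurable a) (hb : Measurable b) :
    ∫⁻ x, kernelOp μ (p i) a x * kernelOp μ (p j) b x ∂μ ≤
      C * ∫⁻ x, (kernelOp μ (p (σ i)) a x * b x + a x * kernelOp μ (p (σ j)) b x) ∂μ := by
  have hcomp : ∀ x, kernelOp μ (p i) (kernelOp μ (p j) b) x ≤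
      C * (kernelOp μ (p (σ i)) b x + kernelOp μ (p (σ j)) b x) := fun x ↦ by
    have hmeas : ∀ k, Measurable (p k x) := fun k ↦ (hp.measurable k).of_uncurry_left
    rw [kernelOp_kernelOp (hp.measurable i) (hp.measurable j) hb]
    calc _ ≤ ∫⁻ y, C * (p (σ i) x y + p (σ j) x y) * b y ∂μ := by
          refine lintegral_mono fun y ↦ ?_
          gcongr
          exact hp.lintegral_mul_le i j x y
      _ = C * (kernelOp μ (p (σ i)) b x + kernelOp μ (p (σ j)) b x) := by
          simp only [mul_assoc, add_mul, kernelOp]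
          rw [lintegral_const_mul _ (by fun_prop), lintegral_add_left (by fun_prop)]
  calc ∫⁻ x, kernelOp μ (p i) a x * kernelOp μ (p j) b x ∂μ
      = ∫⁻ x, a x * kernelOp μ (p i) (kernelOp μ (p j) b) x ∂μ :=
        lintegral_kernelOp_mul (hp.measurable i) (hp.symm i) ha (hp.measurable_kernelOp j hb)
    _ ≤ ∫⁻ x, C * (a x * kernelOp μ (p (σ i)) b x + a x * kernelOp μ (p (σ j)) b x) ∂μ := by
        refine lintegral_mono fun x ↦ (mul_le_mul_right (hcomp x) (a x)).trans_eq ?_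
        ring
    _ = C * ∫⁻ x, (kernelOp μ (p (σ i)) a x * b x + a x * kernelOp μ (p (σ j)) b x) ∂μ := by
        have := hp.measurable_kernelOp (σ i) ha
        have := hp.measurable_kernelOp (σ i) hb
        have := hp.measurable_kernelOp (σ j) hb
        rw [lintegral_const_mul _ (by fun_prop), lintegral_add_left (by fun_prop),
          lintegral_add_left (by fun_prop),
          lintegral_kernelOp_mul (hp.measurable (σ i)) (hp.symm (σ i)) ha hb]

section Family

variable {a : κ → X → ℝ≥0∞}

lemma lintegral_sum_kernelOp_sq_le_mul (hp : IsDominatedKernelFamily μ p σ C) (S : Finset κ)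
    (τ : κ → ι) (ha : ∀ k, Measurable (a k)) :
    ∫⁻ x, (∑ k ∈ S, kernelOp μ (p (τ k)) (a k) x) ^ 2 ∂μ ≤
      2 * C * ∫⁻ x, (∑ k ∈ S, kernelOp μ (p (σ (τ k))) (a k) x) * ∑ k ∈ S, a k x ∂μ := by
  have : ∀ i k, Measurable (kernelOp μ (p i) (a k)) := fun i k ↦
    hp.measurable_kernelOp i (ha k)
  calc ∫⁻ x, (∑ k ∈ S, kernelOp μ (p (τ k)) (a k) x) ^ 2 ∂μ
      = ∑ k ∈ S, ∑ l ∈ S,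
          ∫⁻ x, kernelOp μ (p (τ k)) (a k) x * kernelOp μ (p (τ l)) (a l) x ∂μ := by
        simp only [sq, Finset.sum_mul_sum]
        rw [lintegral_finsetSum _ fun k _ ↦ by fun_prop]
        exact Finset.sum_congr rfl fun k _ ↦ lintegral_finsetSum _ fun l _ ↦ by fun_prop
    _ ≤ ∑ k ∈ S, ∑ l ∈ S, C * ∫⁻ x, (kernelOp μ (p (σ (τ k))) (a k) x * a l x +
          a k x * kernelOp μ (p (σ (τ l))) (a l) x) ∂μ := by
        gcongr with k _ l _
        exact hp.lintegral_kernelOp_mul_kernelOp_le _ _ (ha k) (ha l)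
    _ = C * ∫⁻ x, 2 * ((∑ k ∈ S, kernelOp μ (p (σ (τ k))) (a k) x) * ∑ k ∈ S, a k x) ∂μ := by
        simp only [← Finset.mul_sum]
        congr 1
        calc _ = ∫⁻ x, ∑ k ∈ S, ∑ l ∈ S, (kernelOp μ (p (σ (τ k))) (a k) x * a l x +
              a k x * kernelOp μ (p (σ (τ l))) (a l) x) ∂μ := by
              rw [lintegral_finsetSum _ fun k _ ↦ by fun_prop]
              exact Finset.sum_congr rfl fun k _ ↦
                (lintegral_finsetSum _ fun l _ ↦ by fun_prop).symm
          _ = _ := lintegral_congr fun x ↦ by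
              simp only [Finset.sum_add_distrib, ← Finset.sum_mul_sum]
              ring
    _ = _ := by
        rw [lintegral_const_mul _ (by fun_prop)]
        ring

lemma lintegral_sum_kernelOp_sq_le_card (hp : IsDominatedKernelFamily μ p σ C) (S : Finset κ)
    (τ : κ → ι) (ha : ∀ k, Measurable (a k)) :
    ∫⁻ x, (∑ k ∈ S, kernelOp μ (p (τ k)) (a k) x) ^ 2 ∂μ ≤
      S.card ^ 2 * ∫⁻ x, (∑ k ∈ S, a k x) ^ 2 ∂μ := by
  have : ∀ k, Measurable (kernelOp μ (p (τ k)) (a k)) := fun k ↦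
    hp.measurable_kernelOp _ (ha k)
  calc ∫⁻ x, (∑ k ∈ S, kernelOp μ (p (τ k)) (a k) x) ^ 2 ∂μ
      ≤ ∫⁻ x, S.card * ∑ k ∈ S, kernelOp μ (p (τ k)) (a k) x ^ 2 ∂μ := by
        refine lintegral_mono fun x ↦ ?_
        have := ENNReal.rpow_sum_le_const_mul_sum_rpow S (fun k ↦ kernelOp μ (p (τ k)) (a k) x)
          one_le_two
        norm_num at this
        exact this
    _ = S.card * ∑ k ∈ S, ∫⁻ x, kernelOp μ (p (τ k)) (a k) x ^ 2 ∂μ := by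
        rw [lintegral_const_mul _ (by fun_prop), lintegral_finsetSum _ fun k _ ↦ by fun_prop]
    _ ≤ S.card * ∑ _k ∈ S, ∫⁻ x, (∑ l ∈ S, a l x) ^ 2 ∂μ := by
        refine mul_le_mul_right (Finset.sum_le_sum fun k hk ↦ ?_) _
        refine (lintegral_kernelOp_sq_le (hp.measurable _) (hp.symm _) (hp.lintegral_le_one _)
          (ha k)).trans (lintegral_mono fun x ↦ ?_)
        gcongr
        exact Finset.single_le_sum (f := fun l ↦ a l x) (fun _ _ ↦ zero_le) hk
    _ = S.card ^ 2 * ∫⁻ x, (∑ k ∈ S, a k x) ^ 2 ∂μ := by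
        rw [Finset.sum_const, nsmul_eq_mul]
        ring

-- The estimate for `τ` involves the family with indices `σ ∘ τ`, so it closes up on taking the
-- supremum over all `τ`, whose finiteness comes from the crude bound by the number of terms.
lemma lintegral_sum_kernelOp_sq_le (hp : IsDominatedKernelFamily μ p σ C) (S : Finset κ)
    (τ : κ → ι) (ha : ∀ k, Measurable (a k)) :
    ∫⁻ x, (∑ k ∈ S, kernelOp μ (p (τ k)) (a k) x) ^ 2 ∂μ ≤
      (2 * C) ^ 2 * ∫⁻ x, (∑ k ∈ S, a k x) ^ 2 ∂μ := by
  set E := ∫⁻ x, (∑ k ∈ S, a k x) ^ 2 ∂μ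
  set A : (κ → ι) → ℝ≥0∞ := fun τ ↦ ∫⁻ x, (∑ k ∈ S, kernelOp μ (p (τ k)) (a k) x) ^ 2 ∂μ
  have : ∀ i k, Measurable (kernelOp μ (p i) (a k)) := fun i k ↦
    hp.measurable_kernelOp i (ha k)
  have hshift : ∀ τ, A τ ^ 2 ≤ (2 * C) ^ 2 * E * ⨆ τ, A τ := fun τ ↦
    calc A τ ^ 2
        ≤ (2 * C) ^ 2 * (∫⁻ x, (∑ k ∈ S, kernelOp μ (p (σ (τ k))) (a k) x) *
            ∑ k ∈ S, a k x ∂μ) ^ 2 := by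
          rw [← mul_pow]
          gcongr
          exact hp.lintegral_sum_kernelOp_sq_le_mul S τ ha
      _ ≤ (2 * C) ^ 2 * (A (σ ∘ τ) * E) := by
          gcongr
          exact lintegral_mul_sq_le (by fun_prop) (by fun_prop)
      _ ≤ (2 * C) ^ 2 * E * ⨆ τ, A τ := by
          rw [mul_comm (A _), ← mul_assoc]
          gcongr
          exact le_iSup A _
  refine (le_iSup A τ).trans (le_of_sq_le_mul_self ?_ fun h₀ h_top ↦ ?_)
  · rw [ENNReal.iSup_pow_of_ne_zero two_ne_zero]
    exact iSup_le hshift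
  · have hE_top : E ≠ ∞ := fun h ↦ h_top (by rw [h, ENNReal.mul_top (left_ne_zero_of_mul h₀)])
    exact ne_top_of_le_ne_top (ENNReal.mul_ne_top (by simp) hE_top)
      (iSup_le fun τ ↦ hp.lintegral_sum_kernelOp_sq_le_card S τ ha)

end Family

end IsDominatedKernelFamily

lemma exists_weights_sum_mul_eq_biSup {S : Finset ι} (hS : S.Nonempty) {u : ι → X → ℝ≥0∞}
    (hu : ∀ i, Measurable (u i)) :
    ∃ w : ι → X → ℝ≥0∞, (∀ i, Measurable (w i)) ∧ (∀ x, ∑ i ∈ S, w i x = 1) ∧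
      ∀ x, ∑ i ∈ S, w i x * u i x = ⨆ i ∈ S, u i x := by
  classical
  set g : X → ℝ≥0∞ := fun x ↦ ⨆ i ∈ S, u i x
  have hg_meas : Measurable g := .biSup _ S.countable_toSet fun i _ ↦ hu i
  set e : ι → X → ℝ≥0∞ := fun i x ↦ if u i x = g x then 1 else 0 with he
  have he_meas : ∀ i, Measurable (e i) := fun i ↦
    Measurable.ite (measurableSet_eq_fun (hu i) hg_meas) measurable_const measurable_const
  have hsum_ne_zero : ∀ x, ∑ i ∈ S, e i x ≠ 0 := fun x ↦ by
    obtain ⟨i, hi, hmax⟩ := S.exists_max_image (u · x) hS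
    have hi_max : u i x = g x := le_antisymm (le_biSup (u · x) hi) (iSup₂_le hmax)
    simpa [he] using ⟨i, hi, hi_max⟩
  have hsum_ne_top : ∀ x, ∑ i ∈ S, e i x ≠ ∞ := fun x ↦
    ENNReal.sum_ne_top.2 fun i _ ↦ by by_cases h : u i x = g x <;> simp [he, h]
  have hsum_one : ∀ x, ∑ i ∈ S, e i x / ∑ j ∈ S, e j x = 1 := fun x ↦ by
    simp only [div_eq_mul_inv, ← Finset.sum_mul]
    exact ENNReal.mul_inv_cancel (hsum_ne_zero x) (hsum_ne_top x)
  refine ⟨fun i x ↦ e i x / ∑ j ∈ S, e j x, fun i ↦ by fun_prop, hsum_one, fun x ↦ ?_⟩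
  have hmul : ∀ i, e i x * u i x = e i x * g x := fun i ↦ by
    simp only [he, ite_mul, one_mul, zero_mul]
    split_ifs with h <;> simp [h]
  simp only [← ENNReal.mul_div_right_comm, hmul]
  simp only [ENNReal.mul_div_right_comm, ← Finset.sum_mul, hsum_one, one_mul]
  rfl

namespace IsDominatedKernelFamily

variable [SFinite μ] {p : ι → X → X → ℝ≥0∞} {σ : ι → ι} {C : ℝ≥0∞} {h : X → ℝ≥0∞}

lemma lintegral_biSup_kernelOp_sq_le_card (hp : IsDominatedKernelFamily μ p σ C) (S : Finset ι)
    (hh : Measurable h) :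
    ∫⁻ x, (⨆ i ∈ S, kernelOp μ (p i) h x) ^ 2 ∂μ ≤ S.card * ∫⁻ x, h x ^ 2 ∂μ := by
  have : ∀ i, Measurable (kernelOp μ (p i) h) := fun i ↦ hp.measurable_kernelOp i hh
  calc ∫⁻ x, (⨆ i ∈ S, kernelOp μ (p i) h x) ^ 2 ∂μ
      ≤ ∫⁻ x, ∑ i ∈ S, kernelOp μ (p i) h x ^ 2 ∂μ := by
        refine lintegral_mono fun x ↦ ?_
        rw [ENNReal.iSup₂_pow_of_ne_zero _ two_ne_zero]
        exact iSup₂_le fun i hi ↦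
          Finset.single_le_sum (f := fun i ↦ kernelOp μ (p i) h x ^ 2) (fun _ _ ↦ zero_le) hi
    _ = ∑ i ∈ S, ∫⁻ x, kernelOp μ (p i) h x ^ 2 ∂μ := lintegral_finsetSum _ fun i _ ↦ by fun_prop
    _ ≤ ∑ _i ∈ S, ∫⁻ x, h x ^ 2 ∂μ := Finset.sum_le_sum fun i _ ↦
        lintegral_kernelOp_sq_le (hp.measurable i) (hp.symm i) (hp.lintegral_le_one i) hh
    _ = S.card * ∫⁻ x, h x ^ 2 ∂μ := by rw [Finset.sum_const, nsmul_eq_mul]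

lemma lintegral_sum_kernelOp_mul (hp : IsDominatedKernelFamily μ p σ C) (S : Finset ι)
    {a : ι → X → ℝ≥0∞} (ha : ∀ i, Measurable (a i)) (hh : Measurable h) :
    ∫⁻ x, (∑ i ∈ S, kernelOp μ (p i) (a i) x) * h x ∂μ =
      ∫⁻ x, ∑ i ∈ S, a i x * kernelOp μ (p i) h x ∂μ := by
  have : ∀ i, Measurable (kernelOp μ (p i) h) := fun i ↦ hp.measurable_kernelOp i hh
  have : ∀ i, Measurable (kernelOp μ (p i) (a i)) := fun i ↦ hp.measurable_kernelOp i (ha i)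
  simp only [Finset.sum_mul]
  rw [lintegral_finsetSum _ fun i _ ↦ by fun_prop, lintegral_finsetSum _ fun i _ ↦ by fun_prop]
  exact Finset.sum_congr rfl fun i _ ↦
    lintegral_kernelOp_mul (hp.measurable i) (hp.symm i) (ha i) hh

-- Writing the maximal function `g` as `∑ wᵢ Pᵢ h`, duality gives `∫ g² = ∫ (∑ Pᵢ (wᵢ g)) h`.
lemma lintegral_biSup_kernelOp_sq_le (hp : IsDominatedKernelFamily μ p σ C) (S : Finset ι)
    (hh : Measurable h) :
    ∫⁻ x, (⨆ i ∈ S, kernelOp μ (p i) h x) ^ 2 ∂μ ≤ (2 * C) ^ 2 * ∫⁻ x, h x ^ 2 ∂μ := by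
  rcases S.eq_empty_or_nonempty with rfl | hS
  · simp
  have hmeas : ∀ i, Measurable (kernelOp μ (p i) h) := fun i ↦ hp.measurable_kernelOp i hh
  obtain ⟨w, hw, hw_one, hw_sup⟩ := exists_weights_sum_mul_eq_biSup hS hmeas
  set g : X → ℝ≥0∞ := fun x ↦ ⨆ i ∈ S, kernelOp μ (p i) h x
  have hg_meas : Measurable g := .biSup _ S.countable_toSet fun i _ ↦ hmeas i
  have hwg : ∀ i, Measurable fun x ↦ w i x * g x := by fun_prop
  have : ∀ i, Measurable (kernelOp μ (p i) fun x ↦ w i x * g x) := fun i ↦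
    hp.measurable_kernelOp i (hwg i)
  have hduality : ∫⁻ x, g x ^ 2 ∂μ =
      ∫⁻ x, (∑ i ∈ S, kernelOp μ (p i) (fun x ↦ w i x * g x) x) * h x ∂μ := by
    rw [hp.lintegral_sum_kernelOp_mul S hwg hh]
    refine lintegral_congr fun x ↦ ?_
    have hg_sum : g x = ∑ i ∈ S, w i x * kernelOp μ (p i) h x := (hw_sup x).symm
    simp only [mul_right_comm (w _ x), ← Finset.sum_mul, ← hg_sum, sq]
  refine le_of_sq_le_mul_self ?_ fun h₀ h_top ↦ ?_
  · calc (∫⁻ x, g x ^ 2 ∂μ) ^ 2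
        ≤ (∫⁻ x, (∑ i ∈ S, kernelOp μ (p i) (fun x ↦ w i x * g x) x) ^ 2 ∂μ) *
            ∫⁻ x, h x ^ 2 ∂μ := by
          rw [hduality]
          exact lintegral_mul_sq_le (by fun_prop) hh.aemeasurable
      _ ≤ ((2 * C) ^ 2 * ∫⁻ x, (∑ i ∈ S, w i x * g x) ^ 2 ∂μ) * ∫⁻ x, h x ^ 2 ∂μ := by
          gcongr
          exact hp.lintegral_sum_kernelOp_sq_le S id hwg
      _ = (2 * C) ^ 2 * (∫⁻ x, h x ^ 2 ∂μ) * ∫⁻ x, g x ^ 2 ∂μ := by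
          simp only [← Finset.sum_mul, hw_one, one_mul]
          ring
  · have h_ne_top : ∫⁻ x, h x ^ 2 ∂μ ≠ ∞ := fun h ↦
      h_top (by rw [h, ENNReal.mul_top (left_ne_zero_of_mul h₀)])
    exact ne_top_of_le_ne_top (ENNReal.mul_ne_top (by simp) h_ne_top)
      (hp.lintegral_biSup_kernelOp_sq_le_card S hh)

theorem lintegral_iSup_kernelOp_sq_le [Countable ι] (hp : IsDominatedKernelFamily μ p σ C)
    (hh : AEMeasurable h μ) :
    ∫⁻ x, (⨆ i, kernelOp μ (p i) h x) ^ 2 ∂μ ≤ (2 * C) ^ 2 * ∫⁻ x, h x ^ 2 ∂μ := by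
  wlog hh_meas : Measurable h generalizing h
  · have hcongr : ∀ i, kernelOp μ (p i) h = kernelOp μ (p i) (hh.mk h) := fun i ↦ by
      ext x
      exact lintegral_congr_ae (hh.ae_eq_mk.mono fun y hy ↦ by simp only [hy])
    have hsq : ∫⁻ x, h x ^ 2 ∂μ = ∫⁻ x, hh.mk h x ^ 2 ∂μ :=
      lintegral_congr_ae (hh.ae_eq_mk.mono fun y hy ↦ by simp only [hy])
    simp only [hcongr, hsq]
    exact this hh.measurable_mk.aemeasurable hh.measurable_mk
  have hmeas : ∀ i, Measurable (kernelOp μ (p i) h) := fun i ↦ hp.measurable_kernelOp i hh_meas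
  have hsup : ∀ x, (⨆ i, kernelOp μ (p i) h x) ^ 2 =
      ⨆ S : Finset ι, (⨆ i ∈ S, kernelOp μ (p i) h x) ^ 2 := fun x ↦ by
    rw [iSup_eq_iSup_finset, ENNReal.iSup_pow]
  simp only [hsup]
  rw [lintegral_iSup_directed_of_measurable
    (f := fun (S : Finset ι) x ↦ (⨆ i ∈ S, kernelOp μ (p i) h x) ^ 2)
    fun S ↦ (Measurable.biSup _ S.countable_toSet fun i _ ↦ hmeas i).pow_const 2]
  · exact iSup_le fun S ↦ hp.lintegral_biSup_kernelOp_sq_le S hh_meas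
  · refine directed_of_isDirected_le fun S T hST x ↦ ?_
    exact pow_le_pow_left' (biSup_mono hST) 2

end IsDominatedKernelFamily

end Maximal

section HeatKernel

variable {V : Type*} [NormedAddCommGroup V] [InnerProductSpace ℝ V]

open Module (finrank)

/-- The heat kernel of `V` at time `t`, normalised so that its Fourier transform is
`ξ ↦ exp (-t ‖ξ‖²)`. -/
noncomputable def heatKernel (t : ℝ) (y : V) : ℝ≥0∞ :=
  ENNReal.ofReal
    ((Real.pi / t) ^ ((finrank ℝ V : ℝ) / 2) * Real.exp (-(Real.pi ^ 2 / t) * ‖y‖ ^ 2))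

lemma heatKernel_sub_comm (t : ℝ) (x y : V) : heatKernel t (x - y) = heatKernel t (y - x) := by
  rw [heatKernel, heatKernel, norm_sub_rev]

lemma norm_sq_div_add_norm_sq_div {s t : ℝ} (hs : 0 < s) (ht : 0 < t) (x y z : V) :
    ‖x - y‖ ^ 2 / s + ‖y - z‖ ^ 2 / t =
      ‖x - z‖ ^ 2 / (s + t) + ‖y - (s + t)⁻¹ • (t • x + s • z)‖ ^ 2 / (s * t / (s + t)) := by
  have hst : s + t ≠ 0 := by positivity
  have hcenter : y - (s + t)⁻¹ • (t • x + s • z) =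
      (s + t)⁻¹ • (s • (y - z) - t • (x - y)) := by
    rw [eq_inv_smul_iff₀ hst, smul_sub, smul_inv_smul₀ hst]
    module
  rw [hcenter, ← sub_add_sub_cancel x y z, norm_add_sq_real, norm_smul, mul_pow,
    norm_sub_sq_real (s • (y - z)), norm_smul, norm_smul, real_inner_smul_left,
    real_inner_smul_right, real_inner_comm (x - y) (y - z)]
  simp only [mul_pow, Real.norm_eq_abs, sq_abs]
  field_simp
  ring

lemma heatKernel_mul_heatKernel {s t : ℝ} (hs : 0 < s) (ht : 0 < t) (x y z : V) :
    heatKernel s (x - y) * heatKernel t (y - z) = heatKernel (s + t) (x - z) *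
      heatKernel (s * t / (s + t)) (y - (s + t)⁻¹ • (t • x + s • z)) := by
  have hprefactor : Real.pi / s * (Real.pi / t) =
      Real.pi / (s + t) * (Real.pi / (s * t / (s + t))) := by field_simp
  have hexponent := norm_sq_div_add_norm_sq_div hs ht x y z
  simp only [heatKernel]
  rw [← ENNReal.ofReal_mul (by positivity), ← ENNReal.ofReal_mul (by positivity),
    mul_mul_mul_comm, ← Real.mul_rpow (by positivity) (by positivity), ← Real.exp_add, hprefactor,
    mul_mul_mul_comm, ← Real.mul_rpow (by positivity) (by positivity), ← Real.exp_add]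
  congr 3
  linear_combination (-Real.pi ^ 2) * hexponent

lemma heatKernel_le_two_rpow_mul {t T : ℝ} (ht : 0 < t) (htT : t ≤ T) (hTt : T ≤ 2 * t) (y : V) :
    heatKernel t y ≤ ENNReal.ofReal (2 ^ ((finrank ℝ V : ℝ) / 2)) * heatKernel T y := by
  have hT : 0 < T := ht.trans_le htT
  unfold heatKernel
  rw [← ENNReal.ofReal_mul (by positivity), ← mul_assoc,
    ← Real.mul_rpow (by positivity) (by positivity)]
  have hprefactor : Real.pi / t ≤ 2 * (Real.pi / T) := by
    rw [← mul_div_assoc, div_le_div_iff₀ ht hT]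
    nlinarith [Real.pi_pos]
  gcongr

variable [MeasurableSpace V] [BorelSpace V]

@[fun_prop]
lemma measurable_heatKernel (t : ℝ) : Measurable (heatKernel t : V → ℝ≥0∞) := by
  unfold heatKernel
  fun_prop

variable [FiniteDimensional ℝ V]

lemma integrable_exp_neg_mul_norm_sq {b : ℝ} (hb : 0 < b) :
    Integrable fun y : V ↦ Real.exp (-b * ‖y‖ ^ 2) := by
  have := (GaussianFourier.integrable_cexp_neg_mul_sq_norm_add (V := V) (b := b) (by simpa) 0 0).re
  refine this.congr (.of_forall fun y ↦ ?_)
  simp [← ofReal_pow, ← ofReal_neg, ← ofReal_mul, ← ofReal_exp]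

lemma lintegral_heatKernel {t : ℝ} (ht : 0 < t) : ∫⁻ y : V, heatKernel t y = 1 := by
  have hb : 0 < Real.pi ^ 2 / t := by positivity
  unfold heatKernel
  rw [← ofReal_integral_eq_lintegral_ofReal
      ((integrable_exp_neg_mul_norm_sq hb).const_mul _) (.of_forall fun y ↦ by positivity),
    integral_const_mul, GaussianFourier.integral_rexp_neg_mul_sq_norm hb,
    ← Real.mul_rpow (by positivity) (by positivity)]
  have : Real.pi / t * (Real.pi / (Real.pi ^ 2 / t)) = 1 := by field_simp
  rw [this, Real.one_rpow, ENNReal.ofReal_one]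

lemma lintegral_heatKernel_mul_heatKernel {s t : ℝ} (hs : 0 < s) (ht : 0 < t) (x z : V) :
    ∫⁻ y, heatKernel s (x - y) * heatKernel t (y - z) = heatKernel (s + t) (x - z) := by
  simp only [heatKernel_mul_heatKernel hs ht]
  rw [lintegral_const_mul _ (by fun_prop), lintegral_sub_right_eq_self,
    lintegral_heatKernel (by positivity), mul_one]

lemma isDominatedKernelFamily_heatKernel :
    IsDominatedKernelFamily (volume : Measure V) (fun (i : ℤ) x y ↦ heatKernel (2 ^ i) (x - y))
      (· + 1) (ENNReal.ofReal (2 ^ ((finrank ℝ V : ℝ) / 2))) where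
  measurable i := (measurable_heatKernel _).comp measurable_sub
  symm i := heatKernel_sub_comm _
  lintegral_le_one i x := by
    simp only [heatKernel_sub_comm _ x]
    rw [lintegral_sub_right_eq_self, lintegral_heatKernel (by positivity)]
  lintegral_mul_le i j x z := by
    rw [lintegral_heatKernel_mul_heatKernel (by positivity) (by positivity)]
    wlog hij : i ≤ j generalizing i j
    · rw [add_comm, add_comm (heatKernel _ _)]
      exact this j i (le_of_not_ge hij)
    have hzpow : (2 : ℝ) ^ i ≤ 2 ^ j := zpow_le_zpow_right₀ one_le_two hij
    have hsucc : (2 : ℝ) ^ (j + 1) = 2 * 2 ^ j := by rw [zpow_add_one₀ two_ne_zero, mul_comm]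
    have hi : (0 : ℝ) < 2 ^ i := by positivity
    refine (heatKernel_le_two_rpow_mul (T := 2 ^ (j + 1)) (by positivity) (by linarith)
      (by linarith) _).trans ?_
    gcongr
    exact le_add_self

lemma kernelOp_heatKernel_le_iSup {t : ℝ} (ht : 0 < t) (h : V → ℝ≥0∞) (x : V) :
    kernelOp volume (fun x y ↦ heatKernel t (x - y)) h x ≤
      ENNReal.ofReal (2 ^ ((finrank ℝ V : ℝ) / 2)) *
        ⨆ i : ℤ, kernelOp volume (fun x y ↦ heatKernel (2 ^ i) (x - y)) h x := by
  obtain ⟨i, hi, hi_succ⟩ := exists_mem_Ioc_zpow ht one_lt_two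
  rw [zpow_add_one₀ two_ne_zero] at hi_succ
  calc kernelOp volume (fun x y ↦ heatKernel t (x - y)) h x
      ≤ ∫⁻ y, ENNReal.ofReal (2 ^ ((finrank ℝ V : ℝ) / 2)) *
          (heatKernel (2 ^ (i + 1)) (x - y) * h y) := by
        refine lintegral_mono fun y ↦ ?_
        rw [← mul_assoc]
        gcongr
        rw [zpow_add_one₀ two_ne_zero]
        exact heatKernel_le_two_rpow_mul ht hi_succ (by linarith) _
    _ = ENNReal.ofReal (2 ^ ((finrank ℝ V : ℝ) / 2)) *
          kernelOp volume (fun x y ↦ heatKernel (2 ^ (i + 1)) (x - y)) h x :=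
        lintegral_const_mul' _ _ ENNReal.ofReal_ne_top
    _ ≤ _ := by
        gcongr
        exact le_iSup (fun i : ℤ ↦ kernelOp volume (fun x y ↦ heatKernel (2 ^ i) (x - y)) h x) _

/-- The maximal function of the heat semigroup. -/
noncomputable def heatMaximalFunction (h : V → ℝ≥0∞) (x : V) : ℝ≥0∞ :=
  ⨆ (t : ℝ) (_ : 0 < t), kernelOp volume (fun x y ↦ heatKernel t (x - y)) h x

lemma kernelOp_heatKernel_le_heatMaximalFunction {t : ℝ} (ht : 0 < t) (h : V → ℝ≥0∞) (x : V) :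
    kernelOp volume (fun x y ↦ heatKernel t (x - y)) h x ≤ heatMaximalFunction h x :=
  le_iSup₂ (f := fun (t : ℝ) (_ : 0 < t) ↦
    kernelOp volume (fun x y ↦ heatKernel t (x - y)) h x) t ht

theorem lintegral_heatMaximalFunction_sq_le {h : V → ℝ≥0∞} (hh : AEMeasurable h) :
    ∫⁻ x, heatMaximalFunction h x ^ 2 ≤
      (2 * ENNReal.ofReal (2 ^ ((finrank ℝ V : ℝ) / 2)) ^ 2) ^ 2 * ∫⁻ x, h x ^ 2 := by
  set C := ENNReal.ofReal (2 ^ ((finrank ℝ V : ℝ) / 2))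
  calc _ ≤ ∫⁻ x, C ^ 2 *
          (⨆ i : ℤ, kernelOp volume (fun x y ↦ heatKernel (2 ^ i) (x - y)) h x) ^ 2 := by
        refine lintegral_mono fun x ↦ ?_
        rw [← mul_pow]
        exact pow_le_pow_left' (iSup₂_le fun t ht ↦ kernelOp_heatKernel_le_iSup ht h x) 2
    _ = C ^ 2 * ∫⁻ x,
          (⨆ i : ℤ, kernelOp volume (fun x y ↦ heatKernel (2 ^ i) (x - y)) h x) ^ 2 :=
        lintegral_const_mul' _ _ (by simp [C])
    _ ≤ C ^ 2 * ((2 * C) ^ 2 * ∫⁻ x, h x ^ 2) := by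
        gcongr
        exact isDominatedKernelFamily_heatKernel.lintegral_iSup_kernelOp_sq_le hh
    _ = (2 * C ^ 2) ^ 2 * ∫⁻ x, h x ^ 2 := by ring

end HeatKernel

section Fourier

variable {V F : Type*} [NormedAddCommGroup V] [InnerProductSpace ℝ V] [FiniteDimensional ℝ V]
  [MeasurableSpace V] [BorelSpace V]

lemma continuous_fourier_of_integrable [NormedAddCommGroup F] [NormedSpace ℂ F] {f : V → F}
    (hf : Integrable f) : Continuous (𝓕 f) :=
  VectorFourier.fourierIntegral_continuous (L := innerₗ V) Real.continuous_fourierChar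
    continuous_inner hf

lemma eLpNorm_two_sq_eq_lintegral {X : Type*} [MeasurableSpace X] {μ : Measure X}
    [NormedAddCommGroup F] (f : X → F) : eLpNorm f 2 μ ^ 2 = ∫⁻ x, ‖f x‖ₑ ^ 2 ∂μ := by
  have h := eLpNorm_nnreal_pow_eq_lintegral (f := f) (μ := μ) (p := 2) two_ne_zero
  simpa only [ENNReal.coe_ofNat, NNReal.coe_ofNat, ENNReal.rpow_ofNat] using h

variable [NormedAddCommGroup F] [InnerProductSpace ℂ F] [CompleteSpace F]

-- The Fourier transforms of `L¹` and of `L²` define the same tempered distribution.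
lemma fourier_ae_eq_fourier_toLp {f : V → F} (hf : Integrable f) (hf₂ : MemLp f 2) :
    𝓕 f =ᵐ[volume] (𝓕 (hf₂.toLp f) : Lp F 2 (volume : Measure V)) := by
  refine ae_eq_of_integral_contDiff_smul_eq (continuous_fourier_of_integrable hf).locallyIntegrable
    ((Lp.memLp _).locallyIntegrable one_le_two) fun g hg hg_supp ↦ ?_
  have hsupp : HasCompactSupport fun x ↦ (g x : ℂ) :=
    hg_supp.comp_left (g := fun r : ℝ ↦ (r : ℂ)) ofReal_zero
  have hsmooth : ContDiff ℝ (⊤ : ℕ∞) fun x ↦ (g x : ℂ) := ofRealCLM.contDiff.comp hg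
  set G := hsupp.toSchwartzMap hsmooth
  calc ∫ x, g x • 𝓕 f x
      = ∫ x, G x • 𝓕 f x := integral_congr_ae (.of_forall fun x ↦ (coe_smul (g x) (𝓕 f x)).symm)
    _ = ∫ x, 𝓕 (⇑G) x • f x := by
        have := VectorFourier.integral_fourierIntegral_smul_eq_flip (L := innerₗ V) (μ := volume)
          (ν := volume) Real.continuous_fourierChar continuous_inner G.integrable hf
        simp only [flip_innerₗ] at this
        exact this.symm
    _ = ∫ x, (𝓕 G) x • (hf₂.toLp f) x := by
        rw [SchwartzMap.fourier_coe]
        exact integral_congr_ae (hf₂.coeFn_toLp.mono fun x hx ↦ by simp only [hx])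
    _ = ∫ x, G x • (𝓕 (hf₂.toLp f) : Lp F 2 volume) x := by
        have := congrArg (· G) (Lp.fourier_toTemperedDistribution_eq (hf₂.toLp f))
        simpa only [TemperedDistribution.fourier_apply, Lp.toTemperedDistribution_apply] using this
    _ = ∫ x, g x • (𝓕 (hf₂.toLp f) : Lp F 2 volume) x :=
        integral_congr_ae (.of_forall fun x ↦ coe_smul (g x) _)

theorem eLpNorm_fourier_of_memLp {f : V → F} (hf : Integrable f) (hf₂ : MemLp f 2) :
    eLpNorm (𝓕 f) 2 volume = eLpNorm f 2 volume := by
  rw [eLpNorm_congr_ae (fourier_ae_eq_fourier_toLp hf hf₂), ← Lp.enorm_def, ← ofReal_norm,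
    Lp.norm_fourier_eq, ofReal_norm, Lp.enorm_toLp]

lemma eLpNorm_fourier_le {f : V → F} (hf : Integrable f) :
    eLpNorm (𝓕 f) 2 volume ≤ eLpNorm f 2 volume := by
  by_cases hf₂ : MemLp f 2
  · exact (eLpNorm_fourier_of_memLp hf hf₂).le
  · have : eLpNorm f 2 volume = ∞ := by
      by_contra h
      exact hf₂ ⟨hf.1, Ne.lt_top h⟩
    exact this ▸ le_top

lemma lintegral_enorm_fourier_sq_le {f : V → F} (hf : Integrable f) :
    ∫⁻ ξ, ‖𝓕 f ξ‖ₑ ^ 2 ≤ ∫⁻ x, ‖f x‖ₑ ^ 2 := by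
  rw [← eLpNorm_two_sq_eq_lintegral, ← eLpNorm_two_sq_eq_lintegral]
  gcongr
  exact eLpNorm_fourier_le hf

lemma lintegral_enorm_fourierInv_sq_le {f : V → F} (hf : Integrable f) :
    ∫⁻ x, ‖𝓕⁻ f x‖ₑ ^ 2 ≤ ∫⁻ ξ, ‖f ξ‖ₑ ^ 2 := by
  simp only [Real.fourierInv_eq_fourier_neg]
  rw [lintegral_neg_eq_self fun x ↦ ‖𝓕 f x‖ₑ ^ 2]
  exact lintegral_enorm_fourier_sq_le hf

end Fourier

section RadialMultiplier

variable {V E : Type*} [NormedAddCommGroup V] [InnerProductSpace ℝ V] [FiniteDimensional ℝ V]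
  [MeasurableSpace V] [BorelSpace V] [NormedAddCommGroup E] [NormedSpace ℂ E]

/-- The operator with Fourier multiplier `ξ ↦ m (‖ξ‖² / v)`, as a function of the Fourier transform
`F` of its argument. -/
noncomputable def radialMultiplierOp (m : ℝ → ℝ) (v : ℝ) (F : V → E) : V → E :=
  𝓕⁻ fun ξ ↦ m (‖ξ‖ ^ 2 / v) • F ξ

lemma stronglyMeasurable_radialMultiplierOp {m : ℝ → ℝ} (hm : Measurable m) {F : V → E}
    (hF : StronglyMeasurable F) :
    StronglyMeasurable fun p : V × ℝ ↦ radialMultiplierOp m p.2 F p.1 := by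
  simp only [radialMultiplierOp, Real.fourierInv_eq']
  refine StronglyMeasurable.integral_prod_right (f := fun (p : V × ℝ) ξ ↦
    Complex.exp (↑(2 * Real.pi * ⟪ξ, p.1⟫) * I) • m (‖ξ‖ ^ 2 / p.2) • F ξ) ?_
  have hm_meas : Measurable fun p : (V × ℝ) × V ↦ m (‖p.2‖ ^ 2 / p.1.2) :=
    hm.comp (by fun_prop)
  have hexp_meas : Measurable fun p : (V × ℝ) × V ↦
      Complex.exp (↑(2 * Real.pi * ⟪p.2, p.1.1⟫) * I) := by fun_prop
  exact hexp_meas.stronglyMeasurable.smul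
    (hm_meas.stronglyMeasurable.smul (hF.comp_measurable measurable_snd))

lemma measurable_enorm_radialMultiplierOp {m : ℝ → ℝ} (hm : Measurable m) {F : V → E}
    (hF : StronglyMeasurable F) (x : V) : Measurable fun v ↦ ‖radialMultiplierOp m v F x‖ₑ :=
  ((stronglyMeasurable_radialMultiplierOp hm hF).comp_measurable
    (g := fun v : ℝ ↦ (x, v)) measurable_prodMk_left).enorm

lemma radialMultiplierOp_add {m₁ m₂ : ℝ → ℝ} {v : ℝ} {F : V → E}
    (h₁ : Integrable fun ξ ↦ m₁ (‖ξ‖ ^ 2 / v) • F ξ)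
    (h₂ : Integrable fun ξ ↦ m₂ (‖ξ‖ ^ 2 / v) • F ξ) (x : V) :
    radialMultiplierOp (m₁ + m₂) v F x =
      radialMultiplierOp m₁ v F x + radialMultiplierOp m₂ v F x := by
  simp only [radialMultiplierOp, Pi.add_apply, add_smul, Real.fourierInv_eq_fourier_neg]
  exact congrFun (VectorFourier.fourierIntegral_add (L := innerₗ V)
    Real.continuous_fourierChar continuous_inner h₁ h₂) (-x)

lemma bochnerRiesz_eq_radialMultiplierOp (n : ℕ) (α R : ℝ) (f : EuclideanSpace ℝ (Fin n) → ℂ)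
    (x : EuclideanSpace ℝ (Fin n)) :
    bochnerRiesz n α R f x = radialMultiplierOp (fun s ↦ max (1 - s) 0 ^ α) (R ^ 2) (𝓕 f) x := by
  rw [bochnerRiesz, radialMultiplierOp, Real.fourierInv_eq']
  refine integral_congr_ae (.of_forall fun ξ ↦ ?_)
  simp only [real_smul, smul_eq_mul, real_inner_comm ξ x]
  rw [mul_comm]
  congr 2
  push_cast
  ring

theorem enorm_radialMultiplierOp_exp_neg_le [CompleteSpace E] {f : V → E} (hf : Integrable f)
    {v : ℝ} (hv : 0 < v) (x : V) :
    ‖radialMultiplierOp (fun s ↦ Real.exp (-s)) v (𝓕 f) x‖ₑ ≤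
      kernelOp volume (fun x y ↦ heatKernel v⁻¹ (x - y)) (fun y ↦ ‖f y‖ₑ) x := by
  have hre : 0 < ((v⁻¹ : ℝ) : ℂ).re := by simpa using hv
  let g : V → ℂ := fun ξ ↦
    Complex.exp (-((v⁻¹ : ℝ) : ℂ) * ‖ξ‖ ^ 2 + 2 * Real.pi * I * (⟪x, ξ⟫ : ℝ))
  have hg : Integrable g :=
    GaussianFourier.integrable_cexp_neg_mul_sq_norm_add hre (2 * Real.pi * I) x
  have hg_fourier (y : V) : ‖𝓕 g y‖ₑ = heatKernel v⁻¹ (x - y) := by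
    have hpow : ((Real.pi : ℂ) / (v⁻¹ : ℝ)) ^ ((Module.finrank ℝ V : ℂ) / 2) =
        (((Real.pi / v⁻¹) ^ ((Module.finrank ℝ V : ℝ) / 2) : ℝ) : ℂ) := by
      rw [Complex.ofReal_cpow (by positivity)]
      push_cast
      rfl
    have hexp : Complex.exp (-(Real.pi : ℂ) ^ 2 * ‖x - y‖ ^ 2 / (v⁻¹ : ℝ)) =
        ((Real.exp (-(Real.pi ^ 2 / v⁻¹) * ‖x - y‖ ^ 2) : ℝ) : ℂ) := by
      push_cast
      ring_nf
    rw [fourier_gaussian_innerProductSpace' hre, hpow, hexp, ← ofReal_mul, ← ofReal_norm,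
      norm_real, Real.norm_of_nonneg (by positivity), heatKernel]
  have hflip : radialMultiplierOp (fun s ↦ Real.exp (-s)) v (𝓕 f) x = ∫ y, 𝓕 g y • f y := by
    have := VectorFourier.integral_fourierIntegral_smul_eq_flip (L := innerₗ V) (μ := volume)
      (ν := volume) Real.continuous_fourierChar continuous_inner hg hf
    simp only [flip_innerₗ] at this
    refine Eq.trans ?_ this.symm
    rw [radialMultiplierOp, Real.fourierInv_eq']
    refine integral_congr_ae (.of_forall fun ξ ↦ ?_)
    dsimp only [g]
    rw [← Complex.coe_smul, smul_smul, ofReal_exp, ← Complex.exp_add, real_inner_comm]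
    congr 2
    push_cast
    ring
  rw [hflip]
  calc ‖∫ y, 𝓕 g y • f y‖ₑ ≤ ∫⁻ y, ‖𝓕 g y • f y‖ₑ := enorm_integral_le_lintegral_enorm _
    _ = kernelOp volume (fun x y ↦ heatKernel v⁻¹ (x - y)) (fun y ↦ ‖f y‖ₑ) x := by
      simp only [enorm_smul, hg_fourier, kernelOp]

end RadialMultiplier

section BochnerRieszSymbol

open ProbabilityTheory (betaPDFReal)

/-- The symbol `(1 - s)₊ ^ γ` of the Bochner–Riesz means of order `γ`, as a function of
`s = ‖ξ‖² / R²`. It vanishes for `s ≥ 1` also when `γ ≤ 0`. -/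
noncomputable def bochnerRieszSymbol (γ s : ℝ) : ℝ :=
  if s < 1 then (1 - s) ^ γ else 0

lemma bochnerRieszSymbol_of_lt {s : ℝ} (hs : s < 1) (γ : ℝ) :
    bochnerRieszSymbol γ s = (1 - s) ^ γ := if_pos hs

lemma bochnerRieszSymbol_of_ge {s : ℝ} (hs : 1 ≤ s) (γ : ℝ) : bochnerRieszSymbol γ s = 0 :=
  if_neg hs.not_gt

lemma bochnerRieszSymbol_nonneg (γ s : ℝ) : 0 ≤ bochnerRieszSymbol γ s := by
  rw [bochnerRieszSymbol]
  split_ifs with hs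
  · exact Real.rpow_nonneg (by linarith) γ
  · rfl

@[fun_prop]
lemma measurable_bochnerRieszSymbol (γ : ℝ) : Measurable (bochnerRieszSymbol γ) :=
  Measurable.ite measurableSet_Iio (by fun_prop) measurable_const

lemma bochnerRieszSymbol_eq_max_rpow {γ : ℝ} (hγ : γ ≠ 0) (s : ℝ) :
    bochnerRieszSymbol γ s = max (1 - s) 0 ^ γ := by
  rcases lt_or_ge s 1 with hs | hs
  · rw [bochnerRieszSymbol_of_lt hs, max_eq_left (by linarith)]
  · rw [bochnerRieszSymbol_of_ge hs, max_eq_right (by linarith), Real.zero_rpow hγ]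

lemma bochnerRieszSymbol_sq (γ s : ℝ) :
    bochnerRieszSymbol γ s ^ 2 = bochnerRieszSymbol (2 * γ) s := by
  rcases lt_or_ge s 1 with hs | hs
  · rw [bochnerRieszSymbol_of_lt hs, bochnerRieszSymbol_of_lt hs, ← Real.rpow_mul_natCast
      (by linarith), Nat.cast_ofNat, mul_comm]
  · rw [bochnerRieszSymbol_of_ge hs, bochnerRieszSymbol_of_ge hs, zero_pow two_ne_zero]

lemma integrableOn_bochnerRieszSymbol {γ : ℝ} (hγ : -1 < γ) :
    IntegrableOn (bochnerRieszSymbol γ) (Set.Ioi 0) := by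
  have hpow : IntegrableOn (fun s : ℝ ↦ (1 - s) ^ γ) (Set.Ioo 0 1) := by
    have := (intervalIntegral.intervalIntegrable_rpow' hγ (a := 1) (b := 0)).comp_sub_left 1
    rw [sub_self, sub_zero, intervalIntegrable_iff_integrableOn_Ioo_of_le zero_le_one] at this
    exact this
  refine ((integrableOn_congr_fun (fun s hs ↦ ?_) measurableSet_Ioo).mp
    hpow).of_forall_sdiff_eq_zero measurableSet_Ioi fun s hs ↦ ?_
  · exact (bochnerRieszSymbol_of_lt hs.2 γ).symm
  · exact bochnerRieszSymbol_of_ge (not_lt.mp fun h ↦ hs.2 ⟨hs.1, h⟩) γ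

lemma bochnerRieszSymbol_sq_arg_le (γ : ℝ) {y : ℝ} (hy : 0 ≤ y) :
    bochnerRieszSymbol γ (y ^ 2) ≤ 2 ^ |γ| * bochnerRieszSymbol γ y := by
  rcases lt_or_ge y 1 with hy1 | hy1
  · rw [bochnerRieszSymbol_of_lt hy1, bochnerRieszSymbol_of_lt (by nlinarith),
      show 1 - y ^ 2 = (1 + y) * (1 - y) by ring, Real.mul_rpow (by linarith) (by linarith)]
    have hfactor : (1 + y) ^ γ ≤ 2 ^ |γ| :=
      (Real.rpow_le_rpow_of_exponent_le (by linarith) (le_abs_self γ)).trans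
        (Real.rpow_le_rpow (by linarith) (by linarith) (abs_nonneg γ))
    gcongr
  · rw [bochnerRieszSymbol_of_ge hy1, bochnerRieszSymbol_of_ge (by nlinarith), mul_zero]

lemma integrable_bochnerRieszSymbol_norm_sq {V : Type*} [NormedAddCommGroup V]
    [InnerProductSpace ℝ V] [FiniteDimensional ℝ V] [MeasurableSpace V] [BorelSpace V]
    {γ : ℝ} (hγ : -1 < γ) {v : ℝ} (hv : 0 < v) :
    Integrable fun ξ : V ↦ bochnerRieszSymbol γ (‖ξ‖ ^ 2 / v) := by
  rcases subsingleton_or_nontrivial V with hV | hV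
  · simp only [Subsingleton.elim _ (0 : V)]
    exact integrable_const _
  have hradial : IntegrableOn
      (fun y : ℝ ↦ y ^ (Module.finrank ℝ V - 1) • bochnerRieszSymbol γ (y ^ 2)) (Set.Ioi 0) := by
    refine ((integrableOn_bochnerRieszSymbol hγ).const_mul (2 ^ |γ|)).mono'
      (by fun_prop) (ae_restrict_of_forall_mem measurableSet_Ioi fun y hy ↦ ?_)
    have hy : 0 < y := hy
    have hle := bochnerRieszSymbol_sq_arg_le γ hy.le
    rw [Real.norm_of_nonneg (smul_nonneg (by positivity) (bochnerRieszSymbol_nonneg _ _))]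
    rcases lt_or_ge y 1 with hy1 | hy1
    · exact (mul_le_of_le_one_left (bochnerRieszSymbol_nonneg _ _)
        (pow_le_one₀ hy.le hy1.le)).trans hle
    · rw [bochnerRieszSymbol_of_ge (s := y ^ 2) (by nlinarith), smul_zero]
      exact mul_nonneg (by positivity) (bochnerRieszSymbol_nonneg _ _)
  have hunit : Integrable fun ξ : V ↦ bochnerRieszSymbol γ (‖ξ‖ ^ 2) :=
    (integrable_fun_norm_addHaar volume (f := fun y ↦ bochnerRieszSymbol γ (y ^ 2))).mpr hradial
  refine (hunit.comp_smul (R := (√v)⁻¹) (by positivity)).congr (.of_forall fun ξ ↦ ?_)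
  simp only [norm_smul, norm_inv, Real.norm_of_nonneg (Real.sqrt_nonneg v), mul_pow, inv_pow,
    Real.sq_sqrt hv.le, div_eq_inv_mul]

lemma betaPDFReal_nonneg {p q : ℝ} (hp : 0 < p) (hq : 0 < q) (r : ℝ) : 0 ≤ betaPDFReal p q r := by
  by_cases hr : 0 < r ∧ r < 1
  · exact (ProbabilityTheory.betaPDFReal_pos hr.1 hr.2 hp hq).le
  · rw [betaPDFReal, if_neg hr]

lemma integrable_betaPDFReal {p q : ℝ} (hp : 0 < p) (hq : 0 < q) :
    Integrable (betaPDFReal p q) := by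
  refine ⟨(ProbabilityTheory.measurable_betaPDFReal p q).aestronglyMeasurable, ?_⟩
  rw [hasFiniteIntegral_iff_ofReal (.of_forall (betaPDFReal_nonneg hp hq))]
  exact (ProbabilityTheory.lintegral_betaPDF_eq_one hp hq).trans_lt ENNReal.one_lt_top

lemma integral_betaPDFReal {p q : ℝ} (hp : 0 < p) (hq : 0 < q) :
    ∫ r, betaPDFReal p q r = 1 := by
  rw [integral_eq_lintegral_of_nonneg_ae (.of_forall (betaPDFReal_nonneg hp hq))
    (by fun_prop)]
  exact (congrArg _ (ProbabilityTheory.lintegral_betaPDF_eq_one hp hq)).trans ENNReal.toReal_one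

lemma betaPDFReal_eq_zero_of_notMem {r : ℝ} (hr : r ∉ Set.Ioo 0 1) (p q : ℝ) :
    betaPDFReal p q r = 0 := if_neg hr

lemma betaPDFReal_mul_bochnerRieszSymbol_eq_zero (p q : ℝ) {r s : ℝ} (h : r ∉ Set.Ioo s 1) :
    betaPDFReal p q r * bochnerRieszSymbol (p - 1) (s / r) = 0 := by
  by_cases hr : r ∈ Set.Ioo 0 1
  · have hrs : r ≤ s := not_lt.mp fun hsr ↦ h ⟨hsr, hr.2⟩
    rw [bochnerRieszSymbol_of_ge ((one_le_div hr.1).mpr hrs), mul_zero]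
  · rw [betaPDFReal_eq_zero_of_notMem hr, zero_mul]

lemma betaPDFReal_mul_bochnerRieszSymbol (p q r : ℝ) {s : ℝ} (hs₀ : 0 ≤ s) (hs₁ : s < 1) :
    betaPDFReal p q r * bochnerRieszSymbol (p - 1) (s / r) =
      (1 - s) ^ (p + q - 2) * betaPDFReal p q ((r - s) / (1 - s)) := by
  have hs : 0 < 1 - s := sub_pos.mpr hs₁
  by_cases hr : r ∈ Set.Ioo s 1
  · obtain ⟨hsr, hr1⟩ := hr
    have hr0 : 0 < r := hs₀.trans_lt hsr
    have hy : 0 < (r - s) / (1 - s) := div_pos (sub_pos.mpr hsr) hs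
    have hy' : 0 < 1 - (r - s) / (1 - s) := by
      rw [sub_pos, div_lt_one hs]
      linarith
    rw [betaPDFReal, if_pos ⟨hr0, hr1⟩, betaPDFReal, if_pos ⟨hy, by linarith⟩,
      bochnerRieszSymbol_of_lt ((div_lt_one hr0).mpr hsr),
      show p + q - 2 = (p - 1) + (q - 1) by ring, Real.rpow_add hs]
    have hleft : r ^ (p - 1) * (1 - s / r) ^ (p - 1) =
        (1 - s) ^ (p - 1) * ((r - s) / (1 - s)) ^ (p - 1) := by
      rw [← Real.mul_rpow hr0.le (by rw [sub_nonneg, div_le_one hr0]; exact hsr.le),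
        ← Real.mul_rpow hs.le hy.le]
      congr 1
      field_simp
    have hright : (1 - r) ^ (q - 1) = (1 - s) ^ (q - 1) * (1 - (r - s) / (1 - s)) ^ (q - 1) := by
      rw [← Real.mul_rpow hs.le hy'.le]
      congr 1
      field_simp
      ring
    rw [hright]
    linear_combination (1 / ProbabilityTheory.beta p q) * ((1 - s) ^ (q - 1) *
      (1 - (r - s) / (1 - s)) ^ (q - 1)) * hleft
  · rw [betaPDFReal_mul_bochnerRieszSymbol_eq_zero p q hr, betaPDFReal_eq_zero_of_notMem, mul_zero]
    rintro ⟨hpos, hlt⟩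
    rw [div_lt_one hs] at hlt
    exact hr ⟨sub_pos.mp ((div_pos_iff_of_pos_right hs).mp hpos), by linarith⟩

lemma integrable_betaPDFReal_mul_bochnerRieszSymbol {p q : ℝ} (hp : 0 < p) (hq : 0 < q) {s : ℝ}
    (hs : 0 ≤ s) : Integrable fun r ↦ betaPDFReal p q r * bochnerRieszSymbol (p - 1) (s / r) := by
  rcases lt_or_ge s 1 with hs₁ | hs₁
  · simp only [betaPDFReal_mul_bochnerRieszSymbol p q _ hs hs₁]
    exact (((integrable_betaPDFReal hp hq).comp_div (sub_pos.mpr hs₁).ne').comp_sub_right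
      s).const_mul _
  · simp only [betaPDFReal_mul_bochnerRieszSymbol_eq_zero p q
      (Set.Ioo_eq_empty hs₁.not_gt ▸ Set.notMem_empty _)]
    exact integrable_zero _ _ _

theorem integral_betaPDFReal_mul_bochnerRieszSymbol {p q : ℝ} (hp : 0 < p) (hq : 0 < q) {s : ℝ}
    (hs : 0 ≤ s) :
    ∫ r, betaPDFReal p q r * bochnerRieszSymbol (p - 1) (s / r) =
      bochnerRieszSymbol (p + q - 1) s := by
  rcases lt_or_ge s 1 with hs₁ | hs₁
  · have h : 0 < 1 - s := sub_pos.mpr hs₁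
    simp only [betaPDFReal_mul_bochnerRieszSymbol p q _ hs hs₁]
    rw [integral_const_mul, integral_sub_right_eq_self (fun r ↦ betaPDFReal p q (r / (1 - s))) s,
      Measure.integral_comp_div, abs_of_pos h, integral_betaPDFReal hp hq,
      bochnerRieszSymbol_of_lt hs₁, smul_eq_mul, mul_one, ← Real.rpow_add_one h.ne']
    ring_nf
  · simp only [betaPDFReal_mul_bochnerRieszSymbol_eq_zero p q
      (Set.Ioo_eq_empty hs₁.not_gt ▸ Set.notMem_empty _), integral_zero,
      bochnerRieszSymbol_of_ge hs₁]

end BochnerRieszSymbol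

section DilationHaar

/-- The dilation-invariant measure `dv / v` on `(0, ∞)`, extended by zero to `ℝ`. -/
noncomputable def dilationHaar : Measure ℝ :=
  (volume.restrict (Set.Ioi 0)).withDensity fun v ↦ ENNReal.ofReal v⁻¹

instance : SFinite dilationHaar := by
  unfold dilationHaar
  infer_instance

lemma lintegral_dilationHaar (φ : ℝ → ℝ≥0∞) :
    ∫⁻ v, φ v ∂dilationHaar = ∫⁻ v in Set.Ioi 0, ENNReal.ofReal v⁻¹ * φ v :=
  lintegral_withDensity_eq_lintegral_mul_non_measurable _ (by fun_prop)
    (.of_forall fun _ ↦ ENNReal.ofReal_lt_top) φ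

lemma ae_pos_dilationHaar : ∀ᵐ v ∂dilationHaar, 0 < v :=
  (withDensity_absolutelyContinuous _ _).ae_le (ae_restrict_mem measurableSet_Ioi)

lemma lintegral_dilationHaar_mul_left (φ : ℝ → ℝ≥0∞) {u : ℝ} (hu : 0 < u) :
    ∫⁻ v, φ (u * v) ∂dilationHaar = ∫⁻ v, φ v ∂dilationHaar := by
  have hsubst := lintegral_image_eq_lintegral_abs_deriv_mul (s := Set.Ioi (0 : ℝ))
    (f := fun v ↦ u * v) (f' := fun _ ↦ u) measurableSet_Ioi
    (fun v _ ↦ by simpa using ((hasDerivAt_id v).const_mul u).hasDerivWithinAt)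
    (mul_right_injective₀ hu.ne').injOn (fun v ↦ ENNReal.ofReal v⁻¹ * φ v)
  rw [Set.image_mul_left_Ioi hu, mul_zero] at hsubst
  rw [lintegral_dilationHaar, lintegral_dilationHaar, hsubst]
  refine setLIntegral_congr_fun measurableSet_Ioi fun v _ ↦ ?_
  rw [← mul_assoc, ← ENNReal.ofReal_mul (abs_nonneg u), abs_of_pos hu, mul_inv,
    mul_inv_cancel_left₀ hu.ne']

lemma lintegral_dilationHaar_inv (φ : ℝ → ℝ≥0∞) :
    ∫⁻ v, φ v⁻¹ ∂dilationHaar = ∫⁻ v, φ v ∂dilationHaar := by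
  have himage : (fun v : ℝ ↦ v⁻¹) '' Set.Ioi 0 = Set.Ioi 0 := by
    ext v
    simp only [Set.image_inv_eq_inv, Set.mem_inv, Set.mem_Ioi, inv_pos]
  have hsubst := lintegral_image_eq_lintegral_abs_deriv_mul (s := Set.Ioi (0 : ℝ))
    (f := fun v ↦ v⁻¹) (f' := fun v ↦ -(v ^ 2)⁻¹) measurableSet_Ioi
    (fun v hv ↦ (hasDerivAt_inv (ne_of_gt hv)).hasDerivWithinAt)
    inv_injective.injOn (fun v ↦ ENNReal.ofReal v⁻¹ * φ v)
  rw [himage] at hsubst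
  rw [lintegral_dilationHaar, lintegral_dilationHaar, hsubst]
  refine setLIntegral_congr_fun measurableSet_Ioi fun v hv ↦ ?_
  have hv : 0 < v := hv
  rw [← mul_assoc, ← ENNReal.ofReal_mul (abs_nonneg _), abs_neg, abs_of_pos (by positivity)]
  congr 2
  field_simp

lemma lintegral_dilationHaar_div (φ : ℝ → ℝ≥0∞) {u : ℝ} (hu : 0 < u) :
    ∫⁻ v, φ (u / v) ∂dilationHaar = ∫⁻ v, φ v ∂dilationHaar := by
  simp only [div_eq_mul_inv]
  rw [lintegral_dilationHaar_inv fun v ↦ φ (u * v), lintegral_dilationHaar_mul_left φ hu]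

lemma sq_lintegral_mul_comp_mul_le {w : ℝ → ℝ} (hw : Measurable w) (hw₀ : ∀ r ≤ 0, w r = 0)
    {q : ℝ → ℝ≥0∞} (hq : Measurable q) {u : ℝ} (hu : 0 < u) :
    (∫⁻ r, ENNReal.ofReal (w r) * q (u * r)) ^ 2 ≤
      (∫⁻ r, ENNReal.ofReal (w r * r) ^ 2 ∂dilationHaar) * ∫⁻ v, q v ^ 2 ∂dilationHaar := by
  have hHaar : ∫⁻ r, ENNReal.ofReal (w r) * q (u * r) =
      ∫⁻ r, ENNReal.ofReal (w r * r) * q (u * r) ∂dilationHaar := by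
    rw [lintegral_dilationHaar, ← setLIntegral_eq_of_support_subset (s := Set.Ioi 0)]
    · refine setLIntegral_congr_fun measurableSet_Ioi fun r hr ↦ ?_
      have hr : 0 < r := hr
      rw [← mul_assoc, ← ENNReal.ofReal_mul (by positivity), mul_comm r⁻¹,
        mul_inv_cancel_right₀ hr.ne']
    · intro r hr
      by_contra h
      exact hr (by simp [hw₀ r (not_lt.mp h)])
  rw [hHaar, ← lintegral_dilationHaar_mul_left (fun v ↦ q v ^ 2) hu]
  exact lintegral_mul_sq_le (by fun_prop) (by fun_prop)

end DilationHaar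

section SquareFunction

variable {V E : Type*} [NormedAddCommGroup V] [InnerProductSpace ℝ V] [FiniteDimensional ℝ V]
  [MeasurableSpace V] [BorelSpace V] [NormedAddCommGroup E] [InnerProductSpace ℂ E]
  [CompleteSpace E]

theorem lintegral_enorm_radialMultiplierOp_sq_le {m : ℝ → ℝ} (hm : Measurable m) (hm₀ : m 0 = 0)
    {F : V → E} (hF : StronglyMeasurable F)
    (hmF : ∀ v, 0 < v → Integrable fun ξ ↦ m (‖ξ‖ ^ 2 / v) • F ξ) :
    ∫⁻ x, ∫⁻ v, ‖radialMultiplierOp m v F x‖ₑ ^ 2 ∂dilationHaar ≤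
      (∫⁻ s, ‖m s‖ₑ ^ 2 ∂dilationHaar) * ∫⁻ ξ, ‖F ξ‖ₑ ^ 2 := by
  have hscale (ξ : V) : ∫⁻ v, ‖m (‖ξ‖ ^ 2 / v)‖ₑ ^ 2 ∂dilationHaar ≤
      ∫⁻ s, ‖m s‖ₑ ^ 2 ∂dilationHaar := by
    rcases eq_or_ne ξ 0 with rfl | hξ
    · simp [hm₀]
    · exact (lintegral_dilationHaar_div (fun s ↦ ‖m s‖ₑ ^ 2) (by positivity)).le
  calc ∫⁻ x, ∫⁻ v, ‖radialMultiplierOp m v F x‖ₑ ^ 2 ∂dilationHaar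
      = ∫⁻ v, (∫⁻ x, ‖radialMultiplierOp m v F x‖ₑ ^ 2) ∂dilationHaar :=
        lintegral_lintegral_swap
          ((stronglyMeasurable_radialMultiplierOp hm hF).enorm.pow_const 2).aemeasurable
    _ ≤ ∫⁻ v, (∫⁻ ξ, ‖m (‖ξ‖ ^ 2 / v)‖ₑ ^ 2 * ‖F ξ‖ₑ ^ 2) ∂dilationHaar := by
        refine lintegral_mono_ae (ae_pos_dilationHaar.mono fun v hv ↦ ?_)
        simpa only [radialMultiplierOp, enorm_smul, mul_pow] using
          lintegral_enorm_fourierInv_sq_le (hmF v hv)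
    _ = ∫⁻ ξ, ∫⁻ v, ‖m (‖ξ‖ ^ 2 / v)‖ₑ ^ 2 * ‖F ξ‖ₑ ^ 2 ∂dilationHaar :=
        lintegral_lintegral_swap (by fun_prop)
    _ = ∫⁻ ξ, (∫⁻ v, ‖m (‖ξ‖ ^ 2 / v)‖ₑ ^ 2 ∂dilationHaar) * ‖F ξ‖ₑ ^ 2 :=
        lintegral_congr fun ξ ↦ lintegral_mul_const _ (by fun_prop)
    _ ≤ ∫⁻ ξ, (∫⁻ s, ‖m s‖ₑ ^ 2 ∂dilationHaar) * ‖F ξ‖ₑ ^ 2 :=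
        lintegral_mono fun ξ ↦ mul_le_mul_left (hscale ξ) _
    _ = (∫⁻ s, ‖m s‖ₑ ^ 2 ∂dilationHaar) * ∫⁻ ξ, ‖F ξ‖ₑ ^ 2 :=
        lintegral_const_mul _ (hF.enorm.pow_const 2)

end SquareFunction

section Finiteness

open ProbabilityTheory (betaPDFReal)

lemma lintegral_ofReal_betaPDFReal_mul_self_sq_lt_top {p q : ℝ} (hp : 0 < p) (hq : 1 / 2 < q) :
    ∫⁻ r, ENNReal.ofReal (betaPDFReal p q r * r) ^ 2 ∂dilationHaar < ∞ := by
  set c := ProbabilityTheory.beta (2 * p) (2 * q - 1) / ProbabilityTheory.beta p q ^ 2 with hc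
  have hsq (r : ℝ) :
      r⁻¹ * (betaPDFReal p q r * r) ^ 2 = c * betaPDFReal (2 * p) (2 * q - 1) r := by
    by_cases hr : r ∈ Set.Ioo 0 1
    · have hr₁ : 0 < 1 - r := sub_pos.mpr hr.2
      have hbeta := ProbabilityTheory.beta_pos (show 0 < 2 * p by linarith)
        (show 0 < 2 * q - 1 by linarith)
      rw [betaPDFReal, if_pos ⟨hr.1, hr.2⟩, betaPDFReal, if_pos ⟨hr.1, hr.2⟩, hc,
        show 2 * p - 1 = (p - 1) + (p - 1) + 1 by ring,
        show 2 * q - 1 - 1 = (q - 1) + (q - 1) by ring, Real.rpow_add_one hr.1.ne',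
        Real.rpow_add hr.1, Real.rpow_add hr₁]
      have := hr.1.ne'
      generalize ProbabilityTheory.beta (2 * p) (2 * q - 1) = b at hbeta
      field_simp
    · simp only [betaPDFReal_eq_zero_of_notMem hr, mul_zero, zero_mul, ne_eq, OfNat.ofNat_ne_zero,
        not_false_eq_true, zero_pow]
  rw [lintegral_dilationHaar]
  refine lt_of_le_of_lt ?_
    (((integrable_betaPDFReal (p := 2 * p) (q := 2 * q - 1) (by linarith) (by linarith)).const_mul
      c).integrableOn (s := Set.Ioi 0)).lintegral_lt_top
  refine setLIntegral_mono' measurableSet_Ioi fun r hr ↦ ?_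
  have hr : 0 < r := hr
  rw [← ENNReal.ofReal_pow (mul_nonneg (betaPDFReal_nonneg hp (by linarith) r) hr.le),
    ← ENNReal.ofReal_mul (by positivity), hsq]

lemma exists_abs_bochnerRieszSymbol_sub_exp_neg_le (γ : ℝ) :
    ∃ K : ℝ, ∀ s ∈ Set.Icc (0 : ℝ) (1 / 2),
      |bochnerRieszSymbol γ s - Real.exp (-s)| ≤ K * s := by
  have hsmooth : ContDiffOn ℝ 1 (fun s : ℝ ↦ (1 - s) ^ γ - Real.exp (-s)) (Set.Icc 0 (1 / 2)) := by
    refine ContDiffOn.sub (ContDiffOn.rpow_const_of_ne (by fun_prop) fun s hs ↦ ?_) (by fun_prop)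
    linarith [hs.2]
  obtain ⟨K, hK⟩ := hsmooth.exists_lipschitzOnWith one_ne_zero (convex_Icc _ _) isCompact_Icc
  refine ⟨K, fun s hs ↦ ?_⟩
  have hdist := hK.dist_le_mul s hs 0 ⟨le_rfl, by norm_num⟩
  rw [bochnerRieszSymbol_of_lt (by linarith [hs.2])]
  simpa [Real.dist_eq, abs_of_nonneg hs.1] using hdist

lemma exists_inv_mul_bochnerRieszSymbol_sub_exp_neg_sq_le (γ : ℝ) :
    ∃ K : ℝ, ∀ s, 0 < s → s⁻¹ * (bochnerRieszSymbol γ s - Real.exp (-s)) ^ 2 ≤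
      4 * bochnerRieszSymbol (2 * γ) s + K * Real.exp (-2 * s) := by
  obtain ⟨K, hK⟩ := exists_abs_bochnerRieszSymbol_sub_exp_neg_le γ
  refine ⟨4 + K ^ 2 * Real.exp 1, fun s hs ↦ ?_⟩
  have hsymb := bochnerRieszSymbol_nonneg (2 * γ) s
  rcases le_or_gt s (1 / 2) with hs' | hs'
  · have hlip := hK s ⟨hs.le, hs'⟩
    have hexp : 1 ≤ Real.exp 1 * Real.exp (-2 * s) := by
      rw [← Real.exp_add, Real.one_le_exp_iff]
      linarith
    calc s⁻¹ * (bochnerRieszSymbol γ s - Real.exp (-s)) ^ 2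
        ≤ s⁻¹ * (K * s) ^ 2 := by
          rw [← sq_abs]
          gcongr
      _ = K ^ 2 * s := by field_simp
      _ ≤ K ^ 2 * (Real.exp 1 * Real.exp (-2 * s)) := by
          gcongr
          linarith
      _ ≤ 4 * bochnerRieszSymbol (2 * γ) s + (4 + K ^ 2 * Real.exp 1) * Real.exp (-2 * s) := by
          linarith [Real.exp_pos (-2 * s)]
  · have hexp : Real.exp (-s) ^ 2 = Real.exp (-2 * s) := by
      rw [← Real.exp_nat_mul]
      push_cast
      ring_nf
    calc s⁻¹ * (bochnerRieszSymbol γ s - Real.exp (-s)) ^ 2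
        ≤ 2 * (2 * bochnerRieszSymbol (2 * γ) s + 2 * Real.exp (-2 * s)) := by
          gcongr
          · exact inv_le_of_inv_le₀ two_pos (by linarith)
          · rw [← bochnerRieszSymbol_sq, ← hexp]
            linarith [sq_nonneg (bochnerRieszSymbol γ s + Real.exp (-s))]
      _ ≤ 4 * bochnerRieszSymbol (2 * γ) s + (4 + K ^ 2 * Real.exp 1) * Real.exp (-2 * s) := by
          have : 0 ≤ K ^ 2 * Real.exp 1 * Real.exp (-2 * s) := by positivity
          linarith

theorem lintegral_enorm_bochnerRieszSymbol_sub_exp_neg_sq_lt_top {γ : ℝ} (hγ : -1 / 2 < γ) :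
    ∫⁻ s, ‖bochnerRieszSymbol γ s - Real.exp (-s)‖ₑ ^ 2 ∂dilationHaar < ∞ := by
  obtain ⟨K, hK⟩ := exists_inv_mul_bochnerRieszSymbol_sub_exp_neg_sq_le γ
  have hdom : IntegrableOn (fun s ↦ 4 * bochnerRieszSymbol (2 * γ) s + K * Real.exp (-2 * s))
      (Set.Ioi 0) :=
    ((integrableOn_bochnerRieszSymbol (by linarith)).const_mul 4).add
      ((integrableOn_exp_mul_Ioi (by norm_num) 0).const_mul _)
  rw [lintegral_dilationHaar]
  refine lt_of_le_of_lt ?_ hdom.lintegral_lt_top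
  refine setLIntegral_mono' measurableSet_Ioi fun s hs ↦ ?_
  have hs : 0 < s := hs
  rw [Real.enorm_eq_ofReal_abs, ← ENNReal.ofReal_pow (abs_nonneg _), sq_abs,
    ← ENNReal.ofReal_mul (by positivity)]
  exact ENNReal.ofReal_le_ofReal (hK s hs)

end Finiteness

section Subordination

variable {V E : Type*} [NormedAddCommGroup V] [InnerProductSpace ℝ V] [FiniteDimensional ℝ V]
  [MeasurableSpace V] [BorelSpace V] [NormedAddCommGroup E] [NormedSpace ℂ E]

lemma integrable_smul_fourier {φ : V → ℝ} (hφ : Integrable φ) {f : V → E} (hf : Integrable f) :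
    Integrable fun ξ ↦ φ ξ • 𝓕 f ξ :=
  hφ.smul_bdd (∫ x, ‖f x‖) (continuous_fourier_of_integrable hf).aestronglyMeasurable
    (.of_forall fun ξ ↦ VectorFourier.norm_fourierIntegral_le_integral_norm _ _ _ _ ξ)

lemma integrable_mul_comp_div_smul {w ρ m : ℝ → ℝ} (hw : Measurable w) (hρ : Measurable ρ)
    (hwρ₀ : ∀ r s, 0 ≤ w r * ρ s)
    (hwρ : ∀ s, 0 ≤ s → Integrable fun r ↦ w r * ρ (s / r))
    (hm : ∀ s, 0 ≤ s → ∫ r, w r * ρ (s / r) = m s) {u : ℝ} (hu : 0 ≤ u) {F : V → E}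
    (hF : AEStronglyMeasurable F volume) (hmF : Integrable fun ξ ↦ m (‖ξ‖ ^ 2 / u) • F ξ) :
    Integrable (fun p : ℝ × V ↦ (w p.1 * ρ (‖p.2‖ ^ 2 / u / p.1)) • F p.2)
      (volume.prod volume) := by
  have hmeas : Measurable fun p : ℝ × V ↦ w p.1 * ρ (‖p.2‖ ^ 2 / u / p.1) :=
    (hw.comp measurable_fst).mul (hρ.comp (by fun_prop))
  have hmeas_smul : AEStronglyMeasurable
      (fun p : ℝ × V ↦ (w p.1 * ρ (‖p.2‖ ^ 2 / u / p.1)) • F p.2) (volume.prod volume) :=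
    hmeas.aestronglyMeasurable.smul hF.comp_snd
  rw [integrable_prod_iff' hmeas_smul]
  have hs (ξ : V) : 0 ≤ ‖ξ‖ ^ 2 / u := by positivity
  refine ⟨.of_forall fun ξ ↦ (hwρ _ (hs ξ)).smul_const (F ξ), hmF.norm.congr ?_⟩
  refine .of_forall fun ξ ↦ ?_
  simp only [norm_smul, Real.norm_of_nonneg (hwρ₀ _ _)]
  rw [integral_mul_const, ← hm _ (hs ξ),
    Real.norm_of_nonneg (integral_nonneg fun r ↦ hwρ₀ r (‖ξ‖ ^ 2 / u / r))]

variable [CompleteSpace E]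

theorem radialMultiplierOp_eq_integral {w ρ m : ℝ → ℝ} (hw : Measurable w) (hρ : Measurable ρ)
    (hwρ₀ : ∀ r s, 0 ≤ w r * ρ s)
    (hwρ : ∀ s, 0 ≤ s → Integrable fun r ↦ w r * ρ (s / r))
    (hm : ∀ s, 0 ≤ s → ∫ r, w r * ρ (s / r) = m s) {u : ℝ} (hu : 0 ≤ u) {F : V → E}
    (hF : AEStronglyMeasurable F volume) (hmF : Integrable fun ξ ↦ m (‖ξ‖ ^ 2 / u) • F ξ) (x : V) :
    radialMultiplierOp m u F x = ∫ r, w r • radialMultiplierOp ρ (u * r) F x := by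
  let e : V → ℂ := fun ξ ↦ Complex.exp (↑(2 * Real.pi * ⟪ξ, x⟫) * I)
  have he (ξ : V) : ‖e ξ‖ = 1 := Complex.norm_exp_ofReal_mul_I _
  have heF : AEStronglyMeasurable fun ξ ↦ e ξ • F ξ :=
    (show Continuous e by fun_prop).aestronglyMeasurable.smul hF
  have hmeF : Integrable fun ξ ↦ m (‖ξ‖ ^ 2 / u) • e ξ • F ξ := by
    simp only [smul_comm _ (e _)]
    refine (integrable_norm_iff ?_).mp ?_
    · exact (show Continuous e by fun_prop).aestronglyMeasurable.smul hmF.1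
    · simpa only [norm_smul, he, one_mul] using hmF.norm
  calc radialMultiplierOp m u F x
      = ∫ ξ, m (‖ξ‖ ^ 2 / u) • e ξ • F ξ := by
        simp only [radialMultiplierOp, Real.fourierInv_eq', smul_comm _ (e _), e]
    _ = ∫ ξ, ∫ r, (w r * ρ (‖ξ‖ ^ 2 / u / r)) • e ξ • F ξ := by
        refine integral_congr_ae (.of_forall fun ξ ↦ ?_)
        simp only [integral_smul_const]
        rw [hm _ (by positivity)]
    _ = ∫ r, ∫ ξ, (w r * ρ (‖ξ‖ ^ 2 / u / r)) • e ξ • F ξ :=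
        (integral_integral_swap
          (integrable_mul_comp_div_smul hw hρ hwρ₀ hwρ hm hu heF hmeF)).symm
    _ = ∫ r, w r • radialMultiplierOp ρ (u * r) F x := by
        refine integral_congr_ae (.of_forall fun r ↦ ?_)
        simp only [radialMultiplierOp, Real.fourierInv_eq', ← integral_smul, mul_smul, div_div,
          smul_comm (_ : ℝ) (e _), e]

end Subordination

section MaximalFunction

open ProbabilityTheory (betaPDFReal)

variable {V E : Type*} [NormedAddCommGroup V] [InnerProductSpace ℝ V] [FiniteDimensional ℝ V]
  [MeasurableSpace V] [BorelSpace V] [NormedAddCommGroup E]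

section NormedSpace

variable [NormedSpace ℂ E] {f : V → E}

lemma integrable_bochnerRieszSymbol_smul_fourier {γ : ℝ} (hγ : -1 < γ) {v : ℝ} (hv : 0 < v)
    (hf : Integrable f) : Integrable fun ξ ↦ bochnerRieszSymbol γ (‖ξ‖ ^ 2 / v) • 𝓕 f ξ :=
  integrable_smul_fourier (integrable_bochnerRieszSymbol_norm_sq hγ hv) hf

lemma integrable_exp_neg_smul_fourier {v : ℝ} (hv : 0 < v) (hf : Integrable f) :
    Integrable fun ξ ↦ Real.exp (-(‖ξ‖ ^ 2 / v)) • 𝓕 f ξ := by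
  refine integrable_smul_fourier ?_ hf
  simpa only [neg_mul, ← div_eq_inv_mul] using
    integrable_exp_neg_mul_norm_sq (V := V) (inv_pos.mpr hv)

lemma integrable_bochnerRieszSymbol_sub_exp_neg_smul_fourier {γ : ℝ} (hγ : -1 < γ) {v : ℝ}
    (hv : 0 < v) (hf : Integrable f) :
    Integrable fun ξ ↦
      (bochnerRieszSymbol γ (‖ξ‖ ^ 2 / v) - Real.exp (-(‖ξ‖ ^ 2 / v))) • 𝓕 f ξ := by
  simp only [sub_smul]
  exact (integrable_bochnerRieszSymbol_smul_fourier hγ hv hf).sub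
    (integrable_exp_neg_smul_fourier hv hf)

variable [CompleteSpace E]

lemma enorm_radialMultiplierOp_bochnerRieszSymbol_le_lintegral {p q : ℝ} (hp : 0 < p) (hq : 0 < q)
    {u : ℝ} (hu : 0 < u) (hf : Integrable f) (x : V) :
    ‖radialMultiplierOp (bochnerRieszSymbol (p + q - 1)) u (𝓕 f) x‖ₑ ≤
      ∫⁻ r, ENNReal.ofReal (betaPDFReal p q r) *
        ‖radialMultiplierOp (bochnerRieszSymbol (p - 1)) (u * r) (𝓕 f) x‖ₑ := by
  have hsubord := radialMultiplierOp_eq_integral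
    (ProbabilityTheory.measurable_betaPDFReal p q) (measurable_bochnerRieszSymbol (p - 1))
    (fun r s ↦ mul_nonneg (betaPDFReal_nonneg hp hq r) (bochnerRieszSymbol_nonneg _ s))
    (fun s ↦ integrable_betaPDFReal_mul_bochnerRieszSymbol hp hq)
    (fun s ↦ integral_betaPDFReal_mul_bochnerRieszSymbol hp hq) hu.le
    (continuous_fourier_of_integrable hf).aestronglyMeasurable
    (integrable_bochnerRieszSymbol_smul_fourier (by linarith) hu hf) x
  rw [hsubord]
  refine (enorm_integral_le_lintegral_enorm _).trans_eq (lintegral_congr fun r ↦ ?_)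
  rw [enorm_smul, Real.enorm_of_nonneg (betaPDFReal_nonneg hp hq r)]

lemma enorm_radialMultiplierOp_bochnerRieszSymbol_le_add {γ : ℝ} (hγ : -1 < γ) {v : ℝ}
    (hv : 0 < v) (hf : Integrable f) (x : V) :
    ‖radialMultiplierOp (bochnerRieszSymbol γ) v (𝓕 f) x‖ₑ ≤
      ‖radialMultiplierOp (fun s ↦ bochnerRieszSymbol γ s - Real.exp (-s)) v (𝓕 f) x‖ₑ +
        heatMaximalFunction (fun y ↦ ‖f y‖ₑ) x := by
  have hadd := radialMultiplierOp_add (m₁ := fun s ↦ bochnerRieszSymbol γ s - Real.exp (-s))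
    (m₂ := fun s ↦ Real.exp (-s))
    (integrable_bochnerRieszSymbol_sub_exp_neg_smul_fourier hγ hv hf)
    (integrable_exp_neg_smul_fourier hv hf) x
  rw [show (fun s ↦ bochnerRieszSymbol γ s - Real.exp (-s)) + (fun s ↦ Real.exp (-s)) =
    bochnerRieszSymbol γ from funext fun s ↦ sub_add_cancel _ _] at hadd
  rw [hadd]
  refine (enorm_add_le _ _).trans ?_
  gcongr
  exact (enorm_radialMultiplierOp_exp_neg_le hf hv x).trans
    (kernelOp_heatKernel_le_heatMaximalFunction (inv_pos.mpr hv) _ x)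

lemma enorm_radialMultiplierOp_bochnerRieszSymbol_le_lintegral_add {p q : ℝ} (hp : 0 < p)
    (hq : 0 < q) {u : ℝ} (hu : 0 < u) (hf : Integrable f) (x : V) :
    ‖radialMultiplierOp (bochnerRieszSymbol (p + q - 1)) u (𝓕 f) x‖ₑ ≤
      (∫⁻ r, ENNReal.ofReal (betaPDFReal p q r) *
        ‖radialMultiplierOp (fun s ↦ bochnerRieszSymbol (p - 1) s - Real.exp (-s)) (u * r)
          (𝓕 f) x‖ₑ) + heatMaximalFunction (fun y ↦ ‖f y‖ₑ) x := by
  set M := heatMaximalFunction (fun y ↦ ‖f y‖ₑ) x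
  have hmass : ∫⁻ r, ENNReal.ofReal (betaPDFReal p q r) = 1 := by
    rw [← ofReal_integral_eq_lintegral_ofReal (integrable_betaPDFReal hp hq)
      (.of_forall (betaPDFReal_nonneg hp hq)), integral_betaPDFReal hp hq, ENNReal.ofReal_one]
  calc ‖radialMultiplierOp (bochnerRieszSymbol (p + q - 1)) u (𝓕 f) x‖ₑ
      ≤ ∫⁻ r, ENNReal.ofReal (betaPDFReal p q r) *
          ‖radialMultiplierOp (bochnerRieszSymbol (p - 1)) (u * r) (𝓕 f) x‖ₑ :=
        enorm_radialMultiplierOp_bochnerRieszSymbol_le_lintegral hp hq hu hf x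
    _ ≤ ∫⁻ r, (ENNReal.ofReal (betaPDFReal p q r) *
          ‖radialMultiplierOp (fun s ↦ bochnerRieszSymbol (p - 1) s - Real.exp (-s)) (u * r)
            (𝓕 f) x‖ₑ + ENNReal.ofReal (betaPDFReal p q r) * M) := by
        refine lintegral_mono fun r ↦ ?_
        rw [← mul_add]
        by_cases hr : r ∈ Set.Ioo 0 1
        · gcongr
          exact enorm_radialMultiplierOp_bochnerRieszSymbol_le_add (by linarith)
            (mul_pos hu hr.1) hf x
        · simp only [betaPDFReal_eq_zero_of_notMem hr, ENNReal.ofReal_zero, zero_mul, le_refl]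
    _ = _ := by
        rw [lintegral_add_right _ (by fun_prop), lintegral_mul_const _ (by fun_prop), hmass,
          one_mul]

theorem enorm_radialMultiplierOp_bochnerRieszSymbol_sq_le {p q : ℝ} (hp : 0 < p) (hq : 0 < q)
    {u : ℝ} (hu : 0 < u) (hf : Integrable f) (x : V) :
    ‖radialMultiplierOp (bochnerRieszSymbol (p + q - 1)) u (𝓕 f) x‖ₑ ^ 2 ≤
      2 * ((∫⁻ r, ENNReal.ofReal (betaPDFReal p q r * r) ^ 2 ∂dilationHaar) *
        (∫⁻ v, ‖radialMultiplierOp (fun s ↦ bochnerRieszSymbol (p - 1) s - Real.exp (-s)) v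
          (𝓕 f) x‖ₑ ^ 2 ∂dilationHaar) +
        heatMaximalFunction (fun y ↦ ‖f y‖ₑ) x ^ 2) := by
  have hmeas : Measurable fun v ↦
      ‖radialMultiplierOp (fun s ↦ bochnerRieszSymbol (p - 1) s - Real.exp (-s)) v (𝓕 f) x‖ₑ :=
    measurable_enorm_radialMultiplierOp (by fun_prop)
      (continuous_fourier_of_integrable hf).stronglyMeasurable x
  refine (pow_le_pow_left'
    (enorm_radialMultiplierOp_bochnerRieszSymbol_le_lintegral_add hp hq hu hf x) 2).trans
    ((add_sq_le_two_mul_sq_add_sq _ _).trans ?_)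
  gcongr
  exact sq_lintegral_mul_comp_mul_le (ProbabilityTheory.measurable_betaPDFReal p q)
    (fun r hr ↦ betaPDFReal_eq_zero_of_notMem (fun h ↦ hr.not_gt h.1) p q) hmeas hu

end NormedSpace

variable [InnerProductSpace ℂ E] [CompleteSpace E]

theorem exists_lintegral_iSup_radialMultiplierOp_bochnerRieszSymbol_sq_le {p q : ℝ}
    (hp : 1 / 2 < p) (hq : 1 / 2 < q) :
    ∃ C ≠ ∞, ∀ f : V → E, Integrable f →
      ∫⁻ x, (⨆ (u : ℝ) (_ : 0 < u),
        ‖radialMultiplierOp (bochnerRieszSymbol (p + q - 1)) u (𝓕 f) x‖ₑ) ^ 2 ≤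
          C * ∫⁻ x, ‖f x‖ₑ ^ 2 := by
  set W := ∫⁻ r, ENNReal.ofReal (betaPDFReal p q r * r) ^ 2 ∂dilationHaar
  set δ : ℝ → ℝ := fun s ↦ bochnerRieszSymbol (p - 1) s - Real.exp (-s)
  set D := ∫⁻ s, ‖δ s‖ₑ ^ 2 ∂dilationHaar
  set H : ℝ≥0∞ := (2 * ENNReal.ofReal (2 ^ ((Module.finrank ℝ V : ℝ) / 2)) ^ 2) ^ 2
  have hW : W < ∞ := lintegral_ofReal_betaPDFReal_mul_self_sq_lt_top (by linarith) hq
  have hD : D < ∞ := lintegral_enorm_bochnerRieszSymbol_sub_exp_neg_sq_lt_top (by linarith)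
  have hH : H ≠ ∞ := by finiteness
  refine ⟨2 * (W * D + H), by finiteness, fun f hf ↦ ?_⟩
  set F := 𝓕 f
  set M : V → ℝ≥0∞ := heatMaximalFunction fun y ↦ ‖f y‖ₑ
  set G : V → ℝ≥0∞ := fun x ↦ ∫⁻ v, ‖radialMultiplierOp δ v F x‖ₑ ^ 2 ∂dilationHaar
  have hδ : Measurable δ := by fun_prop
  have hF : StronglyMeasurable F := (continuous_fourier_of_integrable hf).stronglyMeasurable
  have hG_meas : Measurable G :=
    ((stronglyMeasurable_radialMultiplierOp hδ hF).enorm.pow_const 2).lintegral_prod_right'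
  have hG : ∫⁻ x, G x ≤ D * ∫⁻ x, ‖f x‖ₑ ^ 2 :=
    (lintegral_enorm_radialMultiplierOp_sq_le hδ (by simp [δ, bochnerRieszSymbol]) hF fun v hv ↦
      integrable_bochnerRieszSymbol_sub_exp_neg_smul_fourier (by linarith) hv hf).trans
      (mul_le_mul_right (lintegral_enorm_fourier_sq_le hf) D)
  have hM : ∫⁻ x, M x ^ 2 ≤ H * ∫⁻ x, ‖f x‖ₑ ^ 2 :=
    lintegral_heatMaximalFunction_sq_le hf.1.enorm
  calc ∫⁻ x, (⨆ (u : ℝ) (_ : 0 < u),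
        ‖radialMultiplierOp (bochnerRieszSymbol (p + q - 1)) u F x‖ₑ) ^ 2
      ≤ ∫⁻ x, 2 * (W * G x + M x ^ 2) := by
        refine lintegral_mono fun x ↦ ?_
        simp only [ENNReal.iSup₂_pow_of_ne_zero _ two_ne_zero]
        exact iSup₂_le fun u hu ↦ enorm_radialMultiplierOp_bochnerRieszSymbol_sq_le
          (by linarith) (by linarith) hu hf x
    _ = 2 * (W * (∫⁻ x, G x) + ∫⁻ x, M x ^ 2) := by
        rw [lintegral_const_mul' _ _ ENNReal.ofNat_ne_top, lintegral_add_left (by fun_prop),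
          lintegral_const_mul _ hG_meas]
    _ ≤ 2 * (W * (D * ∫⁻ x, ‖f x‖ₑ ^ 2) + H * ∫⁻ x, ‖f x‖ₑ ^ 2) := by gcongr
    _ = 2 * (W * D + H) * ∫⁻ x, ‖f x‖ₑ ^ 2 := by ring

end MaximalFunction

theorem maximal_bochnerRiesz_L2_bound_general (n : ℕ) (α : ℝ) (hα : 0 < α) :
    ∃ C : ℝ, 0 < C ∧ ∀ f : EuclideanSpace ℝ (Fin n) → ℂ, Integrable f →
      (∫⁻ x, (⨆ (R : ℝ) (_ : 0 < R), (‖bochnerRiesz n α R f x‖₊ : ℝ≥0∞)) ^ (2 : ℝ) ∂volume)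
          ^ (1 / 2 : ℝ)
        ≤ ENNReal.ofReal C * eLpNorm f 2 volume := by
  have hp : 1 / 2 < (α + 1) / 2 := by linarith
  obtain ⟨C, hC, hbound⟩ := exists_lintegral_iSup_radialMultiplierOp_bochnerRieszSymbol_sq_le
    (V := EuclideanSpace ℝ (Fin n)) (E := ℂ) hp hp
  rw [show (α + 1) / 2 + (α + 1) / 2 - 1 = α by ring] at hbound
  have hCK : C ≤ ENNReal.ofReal (√(C.toReal + 1)) ^ 2 := by
    rw [← ENNReal.ofReal_pow (by positivity), Real.sq_sqrt (by positivity),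
      ENNReal.le_ofReal_iff_toReal_le hC (by positivity)]
    linarith
  refine ⟨√(C.toReal + 1), by positivity, fun f hf ↦ ?_⟩
  have hsup (x : EuclideanSpace ℝ (Fin n)) :
      ⨆ (R : ℝ) (_ : 0 < R), (‖bochnerRiesz n α R f x‖₊ : ℝ≥0∞) ≤
        ⨆ (u : ℝ) (_ : 0 < u), ‖radialMultiplierOp (bochnerRieszSymbol α) u (𝓕 f) x‖ₑ := by
    refine iSup₂_le fun R hR ↦ ?_
    rw [bochnerRiesz_eq_radialMultiplierOp, ← funext (bochnerRieszSymbol_eq_max_rpow hα.ne')]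
    exact le_iSup₂ (f := fun (u : ℝ) (_ : 0 < u) ↦
      ‖radialMultiplierOp (bochnerRieszSymbol α) u (𝓕 f) x‖ₑ) (R ^ 2) (by positivity)
  rw [one_div, ENNReal.rpow_inv_le_iff two_pos]
  simp only [ENNReal.rpow_ofNat]
  calc ∫⁻ x, (⨆ (R : ℝ) (_ : 0 < R), (‖bochnerRiesz n α R f x‖₊ : ℝ≥0∞)) ^ 2
      ≤ ∫⁻ x, (⨆ (u : ℝ) (_ : 0 < u),
          ‖radialMultiplierOp (bochnerRieszSymbol α) u (𝓕 f) x‖ₑ) ^ 2 :=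
        lintegral_mono fun x ↦ pow_le_pow_left' (hsup x) 2
    _ ≤ C * ∫⁻ x, ‖f x‖ₑ ^ 2 := hbound f hf
    _ ≤ ENNReal.ofReal (√(C.toReal + 1)) ^ 2 * ∫⁻ x, ‖f x‖ₑ ^ 2 := by gcongr
    _ = (ENNReal.ofReal (√(C.toReal + 1)) * eLpNorm f 2 volume) ^ 2 := by
        rw [mul_pow, eLpNorm_two_sq_eq_lintegral]

theorem maximal_bochnerRiesz_L2_bound (n : ℕ) (hn : 1 ≤ n) (α : ℝ) (hα : 0 < α) :
    ∃ C : ℝ, 0 < C ∧ ∀ f : SchwartzMap (EuclideanSpace ℝ (Fin n)) ℂ,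
      (∫⁻ x, (⨆ (R : ℝ) (_ : 0 < R), (‖bochnerRiesz n α R f x‖₊ : ℝ≥0∞)) ^ (2 : ℝ) ∂volume)
          ^ (1 / 2 : ℝ)
        ≤ ENNReal.ofReal C * eLpNorm f 2 volume := by
  obtain ⟨C, hC, hbound⟩ := maximal_bochnerRiesz_L2_bound_general n α hα
  exact ⟨C, hC, fun f ↦ hbound f f.integrable⟩
end

section
/- Let n ≥ 1 be an integer and let s > n + 1/2. There exists a constant C = C(n,s) such that for every bounded Borel function m : ℝ → ℂ with m(λ) = 0 for |λ| > 2 and ‖m‖_{W_s²} < ∞, every Schwartz function f on ℝⁿ, every t > 0 and every x ∈ ℝⁿ, one has |∫_{ℝⁿ} m(t|ξ|) f̂(ξ) e^{2πi⟨x,ξ⟩} dξ| ≤ C ‖m‖_{W_s²} 𝔐f(x), where 𝔐f is the uncentered Hardy–Littlewood maximal function of f. -/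
open MeasureTheory Complex Filter
open scoped FourierTransform RealInnerProductSpace ENNReal Topology

/-- The Sobolev norm `‖F‖_{W_s²} = (∫ (1+τ²)^s |F̂(τ)|² dτ)^{1/2}` where
`F̂(τ) = ∫ F(λ) e^{-iλτ} dλ`, as an extended nonnegative real. -/
noncomputable def sobolevW2 (s : ℝ) (F : ℝ → ℂ) : ℝ≥0∞ :=
  (∫⁻ τ : ℝ, ENNReal.ofReal ((1 + τ ^ 2) ^ s) *
      (‖∫ l : ℝ, F l * Complex.exp (-(Complex.I * l * τ))‖₊ : ℝ≥0∞) ^ 2) ^ (1 / 2 : ℝ)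

/-- The uncentered Hardy–Littlewood maximal function
`𝔐 f(x) = sup_{B ∋ x} |B|⁻¹ ∫_B |f|`, as an extended nonnegative real. -/
noncomputable def uncenteredMaximal (n : ℕ) (f : EuclideanSpace ℝ (Fin n) → ℂ)
    (x : EuclideanSpace ℝ (Fin n)) : ℝ≥0∞ :=
  ⨆ (c : EuclideanSpace ℝ (Fin n)) (r : ℝ) (_ : 0 < r) (_ : x ∈ Metric.ball c r),
    (∫⁻ y in Metric.ball c r, (‖f y‖₊ : ℝ≥0∞) ∂volume) / volume (Metric.ball c r)

/-!
On `[0, ∞)` write `m(λ) = h(λ) e^{-λ}`, where `h` is the product of `m` with a Schwartz function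
equal to `e^λ` on the support of `m` there. Fourier inversion of `h` exhibits the multiplier
`m(t|ξ|)` as the superposition, with density `ĥ(τ)`, of the damped exponentials
`exp(-t(1 - iθ)|ξ|)`, `θ = 2πτ`.

The kernel of such an exponential is the Poisson kernel at the complex time `t(1 - iθ)`. For real
times it comes from subordination to Gaussians, and analytic continuation gives the same formula
in the right half-plane. Its two natural lower bounds for the denominator interpolate to the
estimate `(1 + |θ|)^{a - (n-1)/2} t^{-n} (1 + |x|/t)^{-a}` for `0 ≤ a ≤ n + 1`; if `a > n`, a dyadic
decomposition bounds the convolution with this majorant by `𝔐f`.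

It remains to bound `∫ (1 + |τ|)^b |ĥ(τ)| dτ`, `b = a - (n-1)/2`, by `‖m‖_{W_s²}`. The functions
with Fourier transform in `L¹((1 + |τ|)^b)` form an algebra, so the Schwartz factor costs only a
constant, and for `m` itself Cauchy–Schwarz applies when `s > b + 1/2`. Letting `a` tend to `n`,
every `s > n/2 + 1` is admissible.
-/

open scoped Real NNReal

section Subordination

variable {F : Type*} [NormedAddCommGroup F] [NormedSpace ℝ F] {c : ℝ}

lemma image_sub_div_Ioi (hc : 0 < c) :
    (fun v : ℝ => v - c / v) '' Set.Ioi 0 = Set.univ := by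
  refine Set.eq_univ_of_forall fun w => ?_
  have hsqrt : |w| < √(w ^ 2 + 4 * c) := by
    rw [← Real.sqrt_sq_eq_abs]
    exact Real.sqrt_lt_sqrt (sq_nonneg w) (by linarith)
  have hpos : 0 < (w + √(w ^ 2 + 4 * c)) / 2 := by linarith [neg_abs_le w]
  have hsq := Real.sq_sqrt (show 0 ≤ w ^ 2 + 4 * c by positivity)
  refine ⟨_, hpos, ?_⟩
  simp only
  rw [sub_eq_iff_eq_add, ← sub_eq_iff_eq_add', eq_div_iff hpos.ne']
  linear_combination hsq / 4

lemma injOn_sub_div_Ioi (hc : 0 < c) : Set.InjOn (fun v : ℝ => v - c / v) (Set.Ioi 0) :=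
  StrictMonoOn.injOn fun _ hv _ _ hvw => sub_lt_sub hvw (div_lt_div_of_pos_left hc hv hvw)

lemma hasDerivWithinAt_sub_div_Ioi :
    ∀ v ∈ Set.Ioi (0 : ℝ),
      HasDerivWithinAt (fun v : ℝ => v - c / v) (1 + c / v ^ 2) (Set.Ioi 0) v := fun v hv => by
  have h := (hasDerivAt_id v).sub ((hasDerivAt_inv (ne_of_gt hv)).const_mul c)
  exact (h.congr_deriv (by ring)).hasDerivWithinAt

lemma integrableOn_Ioi_comp_sub_div_iff (hc : 0 < c) (g : ℝ → F) :
    IntegrableOn (fun v => (1 + c / v ^ 2) • g (v - c / v)) (Set.Ioi 0) ↔ Integrable g := by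
  have h := integrableOn_image_iff_integrableOn_abs_deriv_smul measurableSet_Ioi
    hasDerivWithinAt_sub_div_Ioi (injOn_sub_div_Ioi hc) g
  have habs (v : ℝ) : |1 + c / v ^ 2| = 1 + c / v ^ 2 := abs_of_pos (by positivity)
  simpa only [image_sub_div_Ioi hc, integrableOn_univ, habs] using h.symm

lemma integral_Ioi_comp_sub_div (hc : 0 < c) (g : ℝ → F) :
    ∫ v in Set.Ioi (0 : ℝ), (1 + c / v ^ 2) • g (v - c / v) = ∫ w, g w := by
  have h := integral_image_eq_integral_abs_deriv_smul measurableSet_Ioi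
    hasDerivWithinAt_sub_div_Ioi (injOn_sub_div_Ioi hc) g
  have habs (v : ℝ) : |1 + c / v ^ 2| = 1 + c / v ^ 2 := abs_of_pos (by positivity)
  simpa only [image_sub_div_Ioi hc, setIntegral_univ, habs] using h.symm

lemma integral_Ioi_comp_const_div (hc : 0 < c) (g : ℝ → F) :
    ∫ v in Set.Ioi (0 : ℝ), (c / v ^ 2) • g (c / v) = ∫ v in Set.Ioi (0 : ℝ), g v := by
  have himage : (fun v : ℝ => c / v) '' Set.Ioi 0 = Set.Ioi 0 :=
    Set.Subset.antisymm (Set.image_subset_iff.2 fun v hv => div_pos hc hv)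
      fun v hv => ⟨c / v, div_pos hc hv, div_div_cancel₀ hc.ne'⟩
  have hinj : Set.InjOn (fun v : ℝ => c / v) (Set.Ioi 0) := fun v _ w _ hvw => by
    simpa only [div_eq_mul_inv, mul_eq_mul_left_iff, inv_inj, hc.ne', or_false] using hvw
  have hderiv : ∀ v ∈ Set.Ioi (0 : ℝ),
      HasDerivWithinAt (fun v : ℝ => c / v) (-(c / v ^ 2)) (Set.Ioi 0) v := fun v hv => by
    have h := (hasDerivAt_inv (ne_of_gt hv)).const_mul c
    exact (h.congr_deriv (by ring)).hasDerivWithinAt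
  have habs (v : ℝ) : |-(c / v ^ 2)| = c / v ^ 2 := by
    rw [abs_neg, abs_of_nonneg (by positivity)]
  simpa only [himage, habs] using
    (integral_image_eq_integral_abs_deriv_smul measurableSet_Ioi hderiv hinj g).symm

lemma integral_Ioi_exp_neg_sub_div_sq (hc : 0 < c) :
    ∫ v in Set.Ioi (0 : ℝ), rexp (-(v - c / v) ^ 2) = √π / 2 := by
  set φ : ℝ → ℝ := fun v => rexp (-(v - c / v) ^ 2) with hφ
  have hsum_int : IntegrableOn (fun v => (1 + c / v ^ 2) * φ v) (Set.Ioi 0) := by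
    have h := integrable_exp_neg_mul_sq one_pos
    simpa only [smul_eq_mul, neg_one_mul] using (integrableOn_Ioi_comp_sub_div_iff hc _).2 h
  have hφ_int : IntegrableOn φ (Set.Ioi 0) := by
    refine hsum_int.mono' (Measurable.aestronglyMeasurable (by fun_prop)) (ae_of_all _ fun v => ?_)
    rw [Real.norm_of_nonneg (Real.exp_pos _).le]
    exact le_mul_of_one_le_left (Real.exp_pos _).le (le_add_of_nonneg_right (by positivity))
  have hdiv_int : IntegrableOn (fun v => c / v ^ 2 * φ v) (Set.Ioi 0) :=
    (hsum_int.sub hφ_int).congr (ae_of_all _ fun v => by simp only [Pi.sub_apply]; ring)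
  have hsum : ∫ v in Set.Ioi (0 : ℝ), (1 + c / v ^ 2) * φ v = √π := by
    have h := integral_Ioi_comp_sub_div hc (fun w => rexp (-1 * w ^ 2))
    rw [integral_gaussian, div_one] at h
    simpa only [smul_eq_mul, neg_one_mul] using h
  -- The substitution `v ↦ c / v` leaves `φ` invariant.
  have hdiv : ∫ v in Set.Ioi (0 : ℝ), c / v ^ 2 * φ v = ∫ v in Set.Ioi (0 : ℝ), φ v := by
    simpa only [hφ, smul_eq_mul, div_div_cancel₀ hc.ne', sub_sq_comm _ (c / _)]
      using integral_Ioi_comp_const_div hc φ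
  simp_rw [one_add_mul] at hsum
  rw [integral_add hφ_int hdiv_int, hdiv] at hsum
  linarith

lemma exp_neg_eq_integral_gaussian {r : ℝ} (hr : 0 ≤ r) :
    rexp (-r) = ∫ v in Set.Ioi (0 : ℝ), 2 / √π * rexp (-v ^ 2 - r ^ 2 / (4 * v ^ 2)) := by
  rw [integral_const_mul]
  rcases hr.eq_or_lt with rfl | hr
  · have h := integral_gaussian_Ioi 1
    simp only [neg_one_mul, div_one] at h
    simp only [ne_eq, OfNat.ofNat_ne_zero, not_false_eq_true, zero_pow, zero_div, sub_zero,
      neg_zero, Real.exp_zero, h]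
    field_simp
  · have hsq : ∀ v ∈ Set.Ioi (0 : ℝ), rexp (-v ^ 2 - r ^ 2 / (4 * v ^ 2)) =
        rexp (-r) * rexp (-(v - r / 2 / v) ^ 2) := fun v hv => by
      have hv : v ≠ 0 := ne_of_gt hv
      rw [← Real.exp_add]
      congr 1
      field_simp
      ring
    rw [setIntegral_congr_fun measurableSet_Ioi hsq, integral_const_mul,
      integral_Ioi_exp_neg_sub_div_sq (half_pos hr)]
    field_simp

end Subordination

section FourierTools

variable {V : Type*} [NormedAddCommGroup V] [InnerProductSpace ℝ V] [FiniteDimensional ℝ V]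
  [MeasurableSpace V] [BorelSpace V]

lemma continuous_fourier {f : V → ℂ} (hf : Integrable f) : Continuous (𝓕 f) :=
  VectorFourier.fourierIntegral_continuous Real.continuous_fourierChar continuous_inner hf

lemma fourier_integral_right {α E : Type*} [MeasurableSpace α] {μ : Measure α} [SFinite μ]
    [NormedAddCommGroup E] [NormedSpace ℂ E] {k : V → α → E}
    (hk : Integrable (Function.uncurry k) (volume.prod μ)) (x : V) :
    𝓕 (fun ξ => ∫ a, k ξ a ∂μ) x = ∫ a, 𝓕 (fun ξ => k ξ a) x ∂μ := by
  simp only [Real.fourier_eq, Circle.smul_def, ← integral_smul]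
  refine integral_integral_swap (hk.norm.mono' ?_ (ae_of_all _ fun p => ?_))
  · have hchar : Continuous fun ξ : V => ((𝐞 (-⟪ξ, x⟫) : Circle) : ℂ) := by fun_prop
    exact hchar.aestronglyMeasurable.comp_fst.smul hk.1
  · simp only [Function.uncurry, norm_smul, Circle.norm_coe, one_mul, le_refl]

lemma fourier_mul_fourier {u f : V → ℂ} (hu : Integrable u) (hf : Integrable f) (x : V) :
    𝓕 (fun ξ => u ξ * 𝓕 f ξ) x = ∫ y, 𝓕 u (x + y) * f y := by
  have hexpand (ξ : V) : u ξ * 𝓕 f ξ = ∫ y, (𝐞 (-⟪y, ξ⟫) : ℂ) * (u ξ * f y) := by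
    simp only [Real.fourier_eq, Circle.smul_def, smul_eq_mul, ← integral_const_mul, mul_left_comm]
  have hint : Integrable (Function.uncurry fun ξ y => (𝐞 (-⟪y, ξ⟫) : ℂ) * (u ξ * f y))
      ((volume : Measure V).prod volume) := by
    refine (hu.mul_prod hf).bdd_mul (c := 1) (Continuous.aestronglyMeasurable (by fun_prop)) ?_
    exact ae_of_all _ fun p => (Circle.norm_coe _).le
  simp_rw [hexpand]
  rw [fourier_integral_right hint]
  refine integral_congr_ae (ae_of_all _ fun y => ?_)
  simp only [Real.fourier_eq, Circle.smul_def, smul_eq_mul, ← integral_mul_const]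
  refine integral_congr_ae (ae_of_all _ fun ξ => ?_)
  simp only [inner_add_right, neg_add, AddChar.map_add_eq_mul, Circle.coe_mul,
    real_inner_comm ξ y]
  ring

lemma integral_fourier_mul {f g : V → ℂ} (hf : Integrable f) (hg : Integrable g) :
    ∫ x, 𝓕 f x * g x = ∫ x, f x * 𝓕 g x := by
  have h := VectorFourier.integral_fourierIntegral_smul_eq_flip (L := innerₗ V)
    Real.continuous_fourierChar continuous_inner hf hg
  rwa [flip_innerₗ] at h

lemma integral_fourierInv_mul {f g : V → ℂ} (hf : Integrable f) (hg : Integrable g) :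
    ∫ x, 𝓕⁻ f x * g x = ∫ x, f x * 𝓕⁻ g x := by
  rw [← integral_neg_eq_self]
  simp only [Real.fourierInv_eq_fourier_neg, neg_neg]
  rw [integral_fourier_mul hf hg.comp_neg, ← Real.fourierInv_eq_fourier_comp_neg]
  simp only [Real.fourierInv_eq_fourier_neg]

lemma ae_fourierInv_fourier_eq {f : V → ℂ} (hf : Integrable f) (hf' : Integrable (𝓕 f)) :
    𝓕⁻ (𝓕 f) =ᵐ[volume] f := by
  have hcont : Continuous (𝓕⁻ (𝓕 f)) := by
    rw [Real.fourierInv_eq_fourier_comp_neg]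
    exact continuous_fourier hf'.comp_neg
  refine ae_eq_of_integral_contDiff_smul_eq hcont.locallyIntegrable hf.locallyIntegrable
    fun g hg hgc => ?_
  have hgc' : HasCompactSupport fun x => (g x : ℂ) := hgc.comp_left ofReal_zero
  let G : SchwartzMap V ℂ := hgc'.toSchwartzMap (ofRealCLM.contDiff.comp hg)
  calc ∫ x, g x • 𝓕⁻ (𝓕 f) x = ∫ x, 𝓕⁻ (𝓕 f) x * G x := by simp only [real_smul, mul_comm]; rfl
    _ = ∫ x, 𝓕 f x * (𝓕⁻ G) x := by
      rw [integral_fourierInv_mul hf' G.integrable, SchwartzMap.fourierInv_coe]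
    _ = ∫ x, f x * G x := by
      rw [integral_fourier_mul hf (𝓕⁻ G).integrable, ← SchwartzMap.fourier_coe,
        FourierTransform.fourier_fourierInv_eq]
    _ = ∫ x, g x • f x := by simp only [real_smul, mul_comm]; rfl

end FourierTools

lemma quasiMeasurePreserving_norm {V : Type*} [NormedAddCommGroup V] [NormedSpace ℝ V]
    [FiniteDimensional ℝ V] [Nontrivial V] [MeasurableSpace V] [BorelSpace V] (μ : Measure V)
    [μ.IsAddHaarMeasure] : Measure.QuasiMeasurePreserving (fun ξ : V => ‖ξ‖) μ volume := by
  refine ⟨measurable_norm, Measure.AbsolutelyContinuous.mk fun s hs hs0 => ?_⟩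
  rw [Measure.map_apply measurable_norm hs]
  have hzero : (fun r : ℝ => r ^ (Module.finrank ℝ V - 1) • s.indicator (1 : ℝ → ℝ) r)
      =ᵐ[volume.restrict (Set.Ioi 0)] 0 := by
    refine ae_restrict_of_ae ((measure_eq_zero_iff_ae_notMem.1 hs0).mono fun r hr => ?_)
    simp only [Set.indicator_of_notMem hr, smul_zero, Pi.zero_apply]
  have hint : Integrable (fun ξ : V => s.indicator (1 : ℝ → ℝ) ‖ξ‖) μ :=
    (integrable_fun_norm_addHaar μ).2 ((integrable_zero _ _ _).congr hzero.symm)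
  have hval : ∫ ξ : V, s.indicator (1 : ℝ → ℝ) ‖ξ‖ ∂μ = 0 := by
    rw [integral_fun_norm_addHaar μ, integral_congr_ae hzero]
    simp only [Pi.zero_apply, integral_zero, smul_zero]
  have hae := (integral_eq_zero_iff_of_nonneg
    (fun ξ => Set.indicator_nonneg (fun _ _ => zero_le_one) _) hint).1 hval
  refine measure_eq_zero_iff_ae_notMem.2 (hae.mono fun ξ hξ hmem => one_ne_zero (α := ℝ) ?_)
  simpa only [Set.indicator_of_mem (Set.mem_preimage.1 hmem), Pi.one_apply, Pi.zero_apply]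
    using hξ

section PoissonKernel

variable {V : Type*} [NormedAddCommGroup V] [InnerProductSpace ℝ V] [FiniteDimensional ℝ V]
  [MeasurableSpace V] [BorelSpace V]

lemma integrable_norm_pow_mul_exp_neg_mul_norm (k : ℕ) {c : ℝ} (hc : 0 < c) :
    Integrable (fun ξ : V => ‖ξ‖ ^ k * rexp (-c * ‖ξ‖)) := by
  rcases subsingleton_or_nontrivial V with hV | hV
  · exact (integrable_const (‖(0 : V)‖ ^ k * rexp (-c * ‖(0 : V)‖))).congr
      (ae_of_all _ fun ξ => by rw [Subsingleton.elim ξ 0])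
  rw [integrable_fun_norm_addHaar volume (f := fun r : ℝ => r ^ k * rexp (-c * r))]
  have h := integrableOn_rpow_mul_exp_neg_mul_rpow (p := 1)
    (s := ((Module.finrank ℝ V - 1 + k : ℕ) : ℝ)) (neg_one_lt_zero.trans_le (Nat.cast_nonneg _))
    one_pos hc
  refine h.congr_fun (fun r _ => ?_) measurableSet_Ioi
  simp only [Real.rpow_natCast, Real.rpow_one, smul_eq_mul]
  ring

lemma integrable_exp_neg_mul_norm {c : ℝ} (hc : 0 < c) :
    Integrable (fun ξ : V => rexp (-c * ‖ξ‖)) := by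
  simpa only [pow_zero, one_mul] using integrable_norm_pow_mul_exp_neg_mul_norm 0 hc

lemma norm_cexp_neg_mul_ofReal (z : ℂ) (r : ℝ) : ‖cexp (-z * r)‖ = rexp (-z.re * r) := by
  rw [norm_exp, re_mul_ofReal, neg_re]

lemma integrable_cexp_neg_mul_norm {z : ℂ} (hz : 0 < z.re) :
    Integrable (fun ξ : V => cexp (-z * ‖ξ‖)) := by
  refine (integrable_exp_neg_mul_norm hz).mono' (Continuous.aestronglyMeasurable (by fun_prop))
    (ae_of_all _ fun ξ => (norm_cexp_neg_mul_ofReal z ‖ξ‖).le)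

lemma fourier_exp_neg_norm_sq_div {a : ℝ} (ha : 0 < a) (x : V) :
    𝓕 (fun ξ : V => ((rexp (-‖ξ‖ ^ 2 / (4 * a ^ 2)) : ℝ) : ℂ)) x =
      ((2 * √π * a) ^ Module.finrank ℝ V * rexp (-(2 * π * a * ‖x‖) ^ 2) : ℝ) := by
  have hb : 0 < ((4 * a ^ 2)⁻¹ : ℝ) := by positivity
  have h := fourier_gaussian_innerProductSpace (V := V) (b := ((4 * a ^ 2)⁻¹ : ℝ)) hb x
  have hfun : (fun ξ : V => ((rexp (-‖ξ‖ ^ 2 / (4 * a ^ 2)) : ℝ) : ℂ)) =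
      fun ξ => cexp (-((4 * a ^ 2)⁻¹ : ℝ) * ‖ξ‖ ^ 2) := by
    funext ξ
    push_cast
    ring_nf
  have hbase : (π : ℂ) / ((4 * a ^ 2)⁻¹ : ℝ) = ((2 * √π * a) ^ 2 : ℝ) := by
    rw [← ofReal_div, mul_pow, mul_pow, Real.sq_sqrt Real.pi_pos.le]
    congr 1
    field_simp
    norm_num
  have hpow : (((2 * √π * a) ^ 2 : ℝ) : ℂ) ^ ((Module.finrank ℝ V : ℂ) / 2) =
      ((2 * √π * a) ^ Module.finrank ℝ V : ℝ) := by
    rw [show (Module.finrank ℝ V : ℂ) / 2 = ((Module.finrank ℝ V / 2 : ℝ) : ℂ) by push_cast; rfl,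
      ← ofReal_cpow (by positivity), ← Real.rpow_natCast_mul (by positivity), ← Real.rpow_natCast]
    congr 2
    push_cast
    ring
  rw [hfun, h, hbase, hpow, ofReal_mul, ofReal_exp]
  congr 2
  push_cast
  field_simp
  ring

/-- The normalising constant `2ᵈ π^((d-1)/2) Γ((d+1)/2)` of the Poisson kernel on `ℝᵈ`, i.e. of the
Fourier transform of `ξ ↦ exp (-y‖ξ‖)`. -/
noncomputable def poissonConst (d : ℕ) : ℝ :=
  (2 * √π) ^ d / √π * Real.Gamma ((d + 1) / 2)

lemma poissonConst_pos (d : ℕ) : 0 < poissonConst d := by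
  have := Real.Gamma_pos_of_pos (show (0 : ℝ) < (d + 1) / 2 by positivity)
  unfold poissonConst
  positivity

lemma integrable_gaussian_subordination {y : ℝ} (hy : 0 < y) :
    Integrable (fun p : V × ℝ => 2 / √π * rexp (-p.2 ^ 2 - (y * ‖p.1‖) ^ 2 / (4 * p.2 ^ 2)))
      (volume.prod (volume.restrict (Set.Ioi 0))) := by
  refine (integrable_prod_iff (Measurable.aestronglyMeasurable (by fun_prop))).2
    ⟨ae_of_all _ fun ξ => ?_, ?_⟩
  · refine (((integrable_exp_neg_mul_sq one_pos).const_mul (2 / √π)).integrableOn).mono'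
      (Measurable.aestronglyMeasurable (by fun_prop)) (ae_of_all _ fun v => ?_)
    have : 0 ≤ (y * ‖ξ‖) ^ 2 / (4 * v ^ 2) := by positivity
    rw [Real.norm_of_nonneg (by positivity)]
    gcongr
    linarith
  · refine (integrable_exp_neg_mul_norm hy).congr (ae_of_all _ fun ξ => ?_)
    simp only
    rw [← neg_mul_eq_neg_mul, exp_neg_eq_integral_gaussian (by positivity)]
    exact integral_congr_ae (ae_of_all _ fun v => (Real.norm_of_nonneg (by positivity)).symm)

lemma integral_Ioi_pow_mul_exp_neg_mul_sq (d : ℕ) {b : ℝ} (hb : 0 < b) :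
    ∫ v in Set.Ioi (0 : ℝ), v ^ d * rexp (-b * v ^ 2) =
      b ^ (-((d : ℝ) + 1) / 2) * (1 / 2) * Real.Gamma ((d + 1) / 2) := by
  have hd : (-1 : ℝ) < d := neg_one_lt_zero.trans_le d.cast_nonneg
  simpa only [Real.rpow_natCast, Real.rpow_two] using
    integral_rpow_mul_exp_neg_mul_rpow two_pos hd hb

lemma fourier_gaussian_subordination {y v : ℝ} (hy : 0 < y) (hv : 0 < v) (x : V) :
    𝓕 (fun ξ : V => ((2 / √π * rexp (-v ^ 2 - (y * ‖ξ‖) ^ 2 / (4 * v ^ 2)) : ℝ) : ℂ)) x =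
      (2 / √π * (2 * √π / y) ^ Module.finrank ℝ V * (v ^ Module.finrank ℝ V *
        rexp (-((y ^ 2 + (2 * π * ‖x‖) ^ 2) / y ^ 2) * v ^ 2)) : ℝ) := by
  have hfun : (fun ξ : V => ((2 / √π * rexp (-v ^ 2 - (y * ‖ξ‖) ^ 2 / (4 * v ^ 2)) : ℝ) : ℂ)) =
      ((2 / √π * rexp (-v ^ 2) : ℝ) : ℂ) •
        fun ξ : V => ((rexp (-‖ξ‖ ^ 2 / (4 * (v / y) ^ 2)) : ℝ) : ℂ) := by
    funext ξ
    rw [Pi.smul_apply, smul_eq_mul, ← ofReal_mul, mul_assoc, ← Real.exp_add]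
    congr 3
    field_simp
    ring
  have hexp : -((y ^ 2 + (2 * π * ‖x‖) ^ 2) / y ^ 2) * v ^ 2 =
      -v ^ 2 + -(2 * π * (v / y) * ‖x‖) ^ 2 := by
    field_simp
    ring
  have hsmul (c : ℂ) (g : V → ℂ) : 𝓕 (c • g) x = c • 𝓕 g x :=
    congrFun (VectorFourier.fourierIntegral_const_smul _ _ _ g c) x
  rw [hfun, hsmul, fourier_exp_neg_norm_sq_div (div_pos hv hy), smul_eq_mul, ← ofReal_mul, hexp,
    Real.exp_add, ← mul_div_right_comm, mul_div_assoc, mul_pow, div_pow]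
  congr 1
  ring

lemma fourier_exp_neg_mul_norm_of_pos {y : ℝ} (hy : 0 < y) (x : V) :
    𝓕 (fun ξ : V => cexp (-y * ‖ξ‖)) x =
      ((poissonConst (Module.finrank ℝ V) * y /
        (y ^ 2 + (2 * π * ‖x‖) ^ 2) ^ (((Module.finrank ℝ V : ℝ) + 1) / 2) : ℝ) : ℂ) := by
  set d := Module.finrank ℝ V with hd
  have hsub (ξ : V) : cexp (-y * ‖ξ‖) = ∫ v in Set.Ioi (0 : ℝ),
      ((2 / √π * rexp (-v ^ 2 - (y * ‖ξ‖) ^ 2 / (4 * v ^ 2)) : ℝ) : ℂ) := by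
    rw [integral_complex_ofReal, ← exp_neg_eq_integral_gaussian (by positivity)]
    push_cast
    ring_nf
  have hpow : ((y ^ 2 + (2 * π * ‖x‖) ^ 2) / y ^ 2) ^ (-((d : ℝ) + 1) / 2) =
      y ^ (d + 1) / (y ^ 2 + (2 * π * ‖x‖) ^ 2) ^ (((d : ℝ) + 1) / 2) := by
    rw [neg_div, Real.rpow_neg (by positivity), Real.div_rpow (by positivity) (by positivity),
      inv_div, ← Real.rpow_natCast_mul hy.le, ← Real.rpow_natCast y (d + 1)]
    congr 2
    push_cast
    ring
  simp_rw [hsub]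
  rw [fourier_integral_right (integrable_gaussian_subordination hy).ofReal,
    setIntegral_congr_fun measurableSet_Ioi
      fun v hv => fourier_gaussian_subordination hy hv x,
    integral_complex_ofReal, integral_const_mul,
    integral_Ioi_pow_mul_exp_neg_mul_sq _ (by positivity), ← hd, hpow, poissonConst]
  rw [div_pow, pow_succ]
  congr 1
  field_simp

lemma sq_add_ofReal_sq_mem_slitPlane {z : ℂ} (hz : 0 < z.re) (b : ℝ) :
    z ^ 2 + (b : ℂ) ^ 2 ∈ slitPlane := by
  have hre : (z ^ 2 + (b : ℂ) ^ 2).re = z.re ^ 2 - z.im ^ 2 + b ^ 2 := by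
    simp only [sq, add_re, mul_re, ofReal_re, ofReal_im, mul_zero, sub_zero]
  have him : (z ^ 2 + (b : ℂ) ^ 2).im = 2 * z.re * z.im := by
    simp only [sq, add_im, mul_im, ofReal_re, ofReal_im, mul_zero, zero_mul, add_zero]
    ring
  rw [mem_slitPlane_iff, hre, him, or_iff_not_imp_right, not_not]
  intro h
  have hzim : z.im = 0 := by simpa only [mul_eq_zero, two_ne_zero, hz.ne', false_or] using h
  rw [hzim]
  nlinarith [sq_nonneg b]

lemma differentiableAt_fourier_exp_neg_mul_norm {z : ℂ} (hz : 0 < z.re) (x : V) :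
    DifferentiableAt ℂ (fun z : ℂ => 𝓕 (fun ξ : V => cexp (-z * ‖ξ‖)) x) z := by
  have hnear : {w : ℂ | z.re / 2 < w.re} ∈ 𝓝 z :=
    (isOpen_lt continuous_const continuous_re).mem_nhds (half_lt_self hz)
  simp only [Real.fourier_eq]
  refine (hasDerivAt_integral_of_dominated_loc_of_deriv_le (μ := volume)
    (F := fun (w : ℂ) (ξ : V) => 𝐞 (-⟪ξ, x⟫) • cexp (-w * ‖ξ‖))
    (F' := fun (w : ℂ) (ξ : V) => 𝐞 (-⟪ξ, x⟫) • (cexp (-w * ‖ξ‖) * (-1 * ‖ξ‖)))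
    (bound := fun ξ => ‖ξ‖ ^ 1 * rexp (-(z.re / 2) * ‖ξ‖)) hnear
    (Eventually.of_forall fun w => Continuous.aestronglyMeasurable (by fun_prop))
    ((Real.fourierIntegral_convergent_iff x).2 (integrable_cexp_neg_mul_norm hz))
    (Continuous.aestronglyMeasurable (by fun_prop)) (ae_of_all _ fun ξ w hw => ?_)
    (integrable_norm_pow_mul_exp_neg_mul_norm 1 (half_pos hz))
    (ae_of_all _ fun ξ w _ => ?_)).2.differentiableAt
  · have hw : z.re / 2 < w.re := hw
    rw [Circle.norm_smul, norm_mul, norm_cexp_neg_mul_ofReal, mul_comm, neg_one_mul, norm_neg,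
      norm_real, norm_norm, pow_one]
    gcongr
  · simp only [Circle.smul_def]
    exact ((hasDerivAt_id w).neg.mul_const (‖ξ‖ : ℂ)).cexp.const_smul (𝐞 (-⟪ξ, x⟫) : ℂ)

lemma frequently_ofReal_nhdsNE {p : ℂ → Prop} {y₀ : ℝ} (h : ∀ y : ℝ, y₀ < y → p y) :
    ∃ᶠ z in 𝓝[≠] (y₀ : ℂ), p z := by
  have htend : Tendsto ((↑) : ℝ → ℂ) (𝓝[>] y₀) (𝓝[≠] (y₀ : ℂ)) :=
    continuous_ofReal.continuousWithinAt.tendsto_nhdsWithin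
      fun y hy => ofReal_injective.ne (ne_of_gt hy)
  exact htend.frequently (Eventually.frequently (eventually_mem_nhdsWithin.mono h))

lemma fourier_exp_neg_mul_norm {z : ℂ} (hz : 0 < z.re) (x : V) :
    𝓕 (fun ξ : V => cexp (-z * ‖ξ‖)) x =
      poissonConst (Module.finrank ℝ V) * z / (z ^ 2 + ((2 * π * ‖x‖ : ℝ) : ℂ) ^ 2) ^
        ((((Module.finrank ℝ V : ℝ) + 1) / 2 : ℝ) : ℂ) := by
  set e : ℝ := ((Module.finrank ℝ V : ℝ) + 1) / 2 with he
  set c : ℝ := poissonConst (Module.finrank ℝ V)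
  set b : ℝ := 2 * π * ‖x‖ with hb
  have hopen : IsOpen {w : ℂ | 0 < w.re} := isOpen_lt continuous_const continuous_re
  have hfourier : AnalyticOnNhd ℂ (fun z : ℂ => 𝓕 (fun ξ : V => cexp (-z * ‖ξ‖)) x)
      {w : ℂ | 0 < w.re} :=
    DifferentiableOn.analyticOnNhd
      (fun w hw => (differentiableAt_fourier_exp_neg_mul_norm hw x).differentiableWithinAt) hopen
  have hformula : AnalyticOnNhd ℂ (fun z : ℂ => c * z / (z ^ 2 + (b : ℂ) ^ 2) ^ (e : ℂ))
      {w : ℂ | 0 < w.re} := by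
    refine DifferentiableOn.analyticOnNhd (fun w hw => ?_) hopen
    have hslit := sq_add_ofReal_sq_mem_slitPlane hw b
    have hbase : DifferentiableAt ℂ (fun z : ℂ => z ^ 2 + (b : ℂ) ^ 2) w := by fun_prop
    have hcpow := hbase.cpow (differentiableAt_const (e : ℂ)) hslit
    have hne : (w ^ 2 + (b : ℂ) ^ 2) ^ (e : ℂ) ≠ 0 :=
      fun h => slitPlane_ne_zero hslit ((cpow_eq_zero_iff _ _).1 h).1
    exact ((differentiableAt_id.const_mul (c : ℂ)).div hcpow hne).differentiableWithinAt
  refine hfourier.eqOn_of_preconnected_of_frequently_eq hformula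
    (convex_halfSpace_re_gt 0).isPreconnected (z₀ := ((1 : ℝ) : ℂ)) ?_
    (frequently_ofReal_nhdsNE fun y hy => ?_) hz
  · simp
  · rw [fourier_exp_neg_mul_norm_of_pos (one_pos.trans hy), ← he, ofReal_div,
      ofReal_cpow (by positivity), hb]
    push_cast
    rfl

lemma one_add_abs_div_two_le_norm_one_sub_mul_I (θ : ℝ) : (1 + |θ|) / 2 ≤ ‖1 - θ * I‖ := by
  have hre := abs_re_le_norm (1 - θ * I)
  have him := abs_im_le_norm (1 - θ * I)
  simp only [sub_re, one_re, mul_re, ofReal_re, I_re, mul_zero, ofReal_im, I_im, mul_one,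
    sub_zero, abs_one] at hre
  simp only [sub_im, one_im, mul_im, ofReal_re, I_im, mul_one, ofReal_im, I_re, mul_zero,
    add_zero, zero_sub, abs_neg] at him
  linarith

lemma one_add_abs_sub_mul_le_norm_sq_add_sq (θ : ℝ) {ρ : ℝ} (hρ : 0 ≤ ρ) :
    (1 + |(|θ| - ρ)|) * (1 + (|θ| + ρ)) / 4 ≤ ‖(1 - θ * I) ^ 2 + (ρ : ℂ) ^ 2‖ := by
  have hfactor : (1 - θ * I) ^ 2 + (ρ : ℂ) ^ 2 =
      (1 - ((θ - ρ : ℝ) : ℂ) * I) * (1 - ((θ + ρ : ℝ) : ℂ) * I) := by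
    push_cast
    linear_combination (ρ : ℂ) ^ 2 * I_sq
  have habs : (1 + |(|θ| - ρ)|) * (1 + (|θ| + ρ)) = (1 + |θ - ρ|) * (1 + |θ + ρ|) := by
    rcases le_total 0 θ with hθ | hθ
    · rw [abs_of_nonneg hθ, abs_of_nonneg (add_nonneg hθ hρ)]
    · rw [abs_of_nonpos hθ, ← neg_add', abs_neg, abs_of_nonpos (sub_nonpos.2 (hθ.trans hρ))]
      ring
  calc (1 + |(|θ| - ρ)|) * (1 + (|θ| + ρ)) / 4
      = (1 + |θ - ρ|) / 2 * ((1 + |θ + ρ|) / 2) := by rw [habs]; ring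
    _ ≤ ‖1 - ((θ - ρ : ℝ) : ℂ) * I‖ * ‖1 - ((θ + ρ : ℝ) : ℂ) * I‖ := by
      gcongr <;> exact one_add_abs_div_two_le_norm_one_sub_mul_I _
    _ = _ := by rw [hfactor, norm_mul]

lemma one_add_abs_le_norm_sq_add_sq (θ : ℝ) {ρ : ℝ} (hρ : 0 ≤ ρ) :
    (1 + |θ|) / 4 ≤ ‖(1 - θ * I) ^ 2 + (ρ : ℂ) ^ 2‖ := by
  refine le_trans ?_ (one_add_abs_sub_mul_le_norm_sq_add_sq θ hρ)
  gcongr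
  nlinarith [abs_nonneg θ, abs_nonneg (|θ| - ρ)]

lemma one_add_sq_div_le_norm_sq_add_sq (θ : ℝ) {ρ : ℝ} (hρ : 0 ≤ ρ) :
    (1 + ρ) ^ 2 / (1 + |θ|) / 4 ≤ ‖(1 - θ * I) ^ 2 + (ρ : ℂ) ^ 2‖ := by
  refine le_trans ?_ (one_add_abs_sub_mul_le_norm_sq_add_sq θ hρ)
  have hθ := abs_nonneg θ
  have hsub : 1 + ρ ≤ (1 + |(|θ| - ρ)|) * (1 + |θ|) := by
    nlinarith [abs_nonneg (|θ| - ρ), neg_abs_le (|θ| - ρ)]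
  gcongr
  rw [div_le_iff₀ (by positivity)]
  calc (1 + ρ) ^ 2 = (1 + ρ) * (1 + ρ) := sq _
    _ ≤ (1 + |(|θ| - ρ)|) * (1 + |θ|) * (1 + (|θ| + ρ)) := by
      gcongr
      linarith
    _ = _ := by ring

lemma rpow_mul_rpow_le_norm_sq_add_sq_rpow (θ : ℝ) {ρ a e : ℝ} (hρ : 0 ≤ ρ) (ha : 0 ≤ a)
    (hae : a ≤ e) :
    (1 + ρ) ^ a * (1 + |θ|) ^ (e / 2 - a) ≤
      2 ^ e * ‖(1 - θ * I) ^ 2 + (ρ : ℂ) ^ 2‖ ^ (e / 2) := by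
  set D := ‖(1 - θ * I) ^ 2 + (ρ : ℂ) ^ 2‖
  have hθ : 0 < 1 + |θ| := by positivity
  have hD : 0 < D := lt_of_lt_of_le (by positivity) (one_add_abs_le_norm_sq_add_sq θ hρ)
  have hfour (c : ℝ) : (4 : ℝ) ^ (c / 2) = 2 ^ c := by
    rw [show (4 : ℝ) = 2 ^ 2 by norm_num, ← Real.rpow_natCast_mul zero_le_two]
    congr 1
    push_cast
    ring
  have hsplit : D ^ (e / 2) = D ^ (a / 2) * D ^ ((e - a) / 2) := by
    rw [← Real.rpow_add hD]
    ring_nf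
  have hlower : ((1 + ρ) ^ 2 / (1 + |θ|) / 4) ^ (a / 2) * ((1 + |θ|) / 4) ^ ((e - a) / 2) ≤
      D ^ (e / 2) := by
    rw [hsplit]
    have := sub_nonneg.2 hae
    gcongr
    · exact one_add_sq_div_le_norm_sq_add_sq θ hρ
    · exact one_add_abs_le_norm_sq_add_sq θ hρ
  calc (1 + ρ) ^ a * (1 + |θ|) ^ (e / 2 - a)
      = 2 ^ e * (((1 + ρ) ^ 2 / (1 + |θ|) / 4) ^ (a / 2) * ((1 + |θ|) / 4) ^ ((e - a) / 2)) := by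
        rw [Real.div_rpow (by positivity) zero_le_four, Real.div_rpow hθ.le zero_le_four,
          Real.div_rpow (by positivity) hθ.le, hfour, hfour,
          ← Real.rpow_natCast_mul (by positivity),
          show e / 2 - a = (e - a) / 2 - a / 2 by ring, Real.rpow_sub hθ,
          show (2 : ℝ) ^ e = 2 ^ a * 2 ^ (e - a) by rw [← Real.rpow_add two_pos]; ring_nf]
        push_cast
        field_simp
    _ ≤ 2 ^ e * D ^ (e / 2) := by gcongr

lemma norm_one_sub_mul_I_div_norm_sq_add_sq_rpow_le (θ : ℝ) {ρ a e : ℝ} (hρ : 0 ≤ ρ)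
    (ha : 0 ≤ a) (hae : a ≤ e) :
    ‖1 - θ * I‖ / ‖(1 - θ * I) ^ 2 + (ρ : ℂ) ^ 2‖ ^ (e / 2) ≤
      2 ^ e * (1 + |θ|) ^ (1 + a - e / 2) * (1 + ρ) ^ (-a) := by
  have hθ : 0 < 1 + |θ| := by positivity
  have hD : 0 < ‖(1 - θ * I) ^ 2 + (ρ : ℂ) ^ 2‖ :=
    lt_of_lt_of_le (by positivity) (one_add_abs_le_norm_sq_add_sq θ hρ)
  have hexp : (1 + |θ|) ^ (1 + a - e / 2) * (1 + |θ|) ^ (e / 2 - a) = 1 + |θ| := by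
    rw [← Real.rpow_add hθ, sub_add_sub_cancel, add_sub_cancel_right, Real.rpow_one]
  rw [div_le_iff₀ (by positivity), Real.rpow_neg (by positivity)]
  calc ‖1 - θ * I‖ ≤ 1 + |θ| := by simpa using norm_sub_le 1 (θ * I)
    _ = (1 + |θ|) ^ (1 + a - e / 2) * ((1 + ρ) ^ a)⁻¹ *
        ((1 + ρ) ^ a * (1 + |θ|) ^ (e / 2 - a)) := by
      rw [mul_assoc, inv_mul_cancel_left₀ (by positivity), hexp]
    _ ≤ (1 + |θ|) ^ (1 + a - e / 2) * ((1 + ρ) ^ a)⁻¹ *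
        (2 ^ e * ‖(1 - θ * I) ^ 2 + (ρ : ℂ) ^ 2‖ ^ (e / 2)) :=
      mul_le_mul_of_nonneg_left (rpow_mul_rpow_le_norm_sq_add_sq_rpow θ hρ ha hae) (by positivity)
    _ = _ := by ring

lemma norm_fourier_exp_neg_mul_norm_le {a : ℝ} (ha : 0 ≤ a)
    (had : a ≤ Module.finrank ℝ V + 1) (x : V) {t : ℝ} (ht : 0 < t) (θ : ℝ) :
    ‖𝓕 (fun ξ : V => cexp (-(t * (1 - θ * I)) * ‖ξ‖)) x‖ ≤
      poissonConst (Module.finrank ℝ V) * 2 ^ ((Module.finrank ℝ V : ℝ) + 1) *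
        (1 + |θ|) ^ (a - ((Module.finrank ℝ V : ℝ) - 1) / 2) *
        ((t ^ Module.finrank ℝ V)⁻¹ * (1 + ‖x‖ / t) ^ (-a)) := by
  set d := Module.finrank ℝ V with hd
  have hre : 0 < (t * (1 - θ * I)).re := by simpa using ht
  set ρ := 2 * π * ‖x‖ / t with hρ_def
  have hρ : 0 ≤ ρ := by positivity
  have hc := poissonConst_pos d
  set D := ‖(1 - θ * I) ^ 2 + (ρ : ℂ) ^ 2‖ with hD_def
  have hD : 0 < D := lt_of_lt_of_le (by positivity) (one_add_abs_le_norm_sq_add_sq θ hρ)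
  have hscale : (t * (1 - θ * I)) ^ 2 + ((2 * π * ‖x‖ : ℝ) : ℂ) ^ 2 =
      (t : ℂ) ^ 2 * ((1 - θ * I) ^ 2 + (ρ : ℂ) ^ 2) := by
    have : (t : ℂ) ≠ 0 := ofReal_ne_zero.2 ht.ne'
    rw [hρ_def]
    push_cast
    field_simp
  have hnorm : ‖𝓕 (fun ξ : V => cexp (-(t * (1 - θ * I)) * ‖ξ‖)) x‖ =
      poissonConst d * (t ^ d)⁻¹ * (‖1 - θ * I‖ / D ^ (((d : ℝ) + 1) / 2)) := by
    rw [fourier_exp_neg_mul_norm hre, ← hd, hscale, norm_div, norm_cpow_real, norm_mul, norm_mul,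
      norm_mul, norm_pow, norm_real, norm_real, Real.norm_of_nonneg hc.le,
      Real.norm_of_nonneg ht.le, ← hD_def, Real.mul_rpow (by positivity) hD.le,
      ← Real.rpow_natCast_mul ht.le, show ((2 : ℕ) : ℝ) * (((d : ℝ) + 1) / 2) = (d + 1 : ℕ) by
        push_cast; ring, Real.rpow_natCast, pow_succ]
    field_simp
  have hdecay : (1 + ρ) ^ (-a) ≤ (1 + ‖x‖ / t) ^ (-a) := by
    refine Real.rpow_le_rpow_of_nonpos (by positivity) ?_ (neg_nonpos.2 ha)
    rw [hρ_def]
    gcongr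
    exact le_mul_of_one_le_left (norm_nonneg x) (by linarith [Real.two_le_pi])
  calc _ ≤ poissonConst d * (t ^ d)⁻¹ *
        (2 ^ ((d : ℝ) + 1) * (1 + |θ|) ^ (1 + a - ((d : ℝ) + 1) / 2) * (1 + ‖x‖ / t) ^ (-a)) := by
        rw [hnorm]
        gcongr
        exact (norm_one_sub_mul_I_div_norm_sq_add_sq_rpow_le θ hρ ha had).trans (by gcongr)
    _ = _ := by ring_nf

end PoissonKernel

section MaximalFunction

variable {V : Type*} [NormedAddCommGroup V]

lemma mul_one_add_norm_div_rpow_neg_le_tsum_indicator {a t : ℝ} (ha : 0 ≤ a) (ht : 0 < t)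
    (g : V → ℝ≥0∞) (x y : V) :
    g y * ENNReal.ofReal ((1 + ‖x - y‖ / t) ^ (-a)) ≤
      ∑' k : ℕ, ENNReal.ofReal (2 ^ a * (2 ^ (-a)) ^ k) *
        (Metric.ball x (2 ^ k * t)).indicator g y := by
  obtain ⟨k, hk, hk'⟩ := exists_nat_pow_near (x := 1 + ‖x - y‖ / t) (y := 2)
    (le_add_of_nonneg_right (by positivity)) one_lt_two
  refine le_trans ?_ (ENNReal.le_tsum (k + 1))
  have hmem : y ∈ Metric.ball x (2 ^ (k + 1) * t) := by
    rw [Metric.mem_ball, dist_comm, dist_eq_norm, ← div_lt_iff₀ ht]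
    linarith
  rw [Set.indicator_of_mem hmem, mul_comm]
  gcongr
  calc (1 + ‖x - y‖ / t) ^ (-a) ≤ ((2 : ℝ) ^ k) ^ (-a) :=
        Real.rpow_le_rpow_of_nonpos (by positivity) hk (neg_nonpos.2 ha)
    _ = 2 ^ a * (2 ^ (-a)) ^ (k + 1) := by
        rw [← Real.rpow_natCast_mul zero_le_two, mul_comm, Real.rpow_mul_natCast zero_le_two,
          pow_succ', ← mul_assoc, ← Real.rpow_add two_pos, add_neg_cancel, Real.rpow_zero, one_mul]

lemma tsum_ofReal_rpow_neg_pow_ne_top {b : ℝ} (hb : 0 < b) :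
    ∑' k : ℕ, ENNReal.ofReal ((2 ^ (-b)) ^ k) ≠ ⊤ := by
  have h := summable_geometric_of_lt_one (by positivity)
    (Real.rpow_lt_one_of_one_lt_of_neg one_lt_two (neg_neg_iff_pos.2 hb))
  rw [← ENNReal.ofReal_tsum_of_nonneg (fun k => by positivity) h]
  exact ENNReal.ofReal_ne_top

variable [NormedSpace ℝ V] [FiniteDimensional ℝ V] [MeasurableSpace V] [BorelSpace V]

lemma exists_lintegral_mul_one_add_norm_div_rpow_neg_le (μ : Measure V) [μ.IsAddHaarMeasure]
    {a : ℝ} (ha : Module.finrank ℝ V < a) :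
    ∃ C : ℝ≥0, ∀ (g : V → ℝ≥0∞) (A : ℝ≥0∞) (x : V), AEMeasurable g μ →
      (∀ r, 0 < r → ∫⁻ y in Metric.ball x r, g y ∂μ ≤ A * μ (Metric.ball x r)) →
      ∀ t, 0 < t → ∫⁻ y, g y *
        ENNReal.ofReal ((t ^ Module.finrank ℝ V)⁻¹ * (1 + ‖x - y‖ / t) ^ (-a)) ∂μ ≤ C * A := by
  set d := Module.finrank ℝ V with hd
  have hS := ENNReal.coe_toNNReal (tsum_ofReal_rpow_neg_pow_ne_top (sub_pos.2 ha))
  have hB := ENNReal.coe_toNNReal (measure_ball_lt_top (μ := μ) (x := 0) (r := 1)).ne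
  refine ⟨(2 ^ a : ℝ).toNNReal * (μ (Metric.ball 0 1)).toNNReal *
    (∑' k : ℕ, ENNReal.ofReal ((2 ^ (-(a - d))) ^ k)).toNNReal, fun g A x hg hA t ht => ?_⟩
  have hscale (k : ℕ) : ENNReal.ofReal ((t ^ d)⁻¹) * (ENNReal.ofReal (2 ^ a * (2 ^ (-a)) ^ k) *
      ENNReal.ofReal ((2 ^ k * t) ^ d)) =
        ENNReal.ofReal (2 ^ a) * ENNReal.ofReal ((2 ^ (-(a - d))) ^ k) := by
    rw [← ENNReal.ofReal_mul (by positivity), ← ENNReal.ofReal_mul (by positivity),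
      ← ENNReal.ofReal_mul (by positivity), neg_sub, sub_eq_neg_add, Real.rpow_add two_pos,
      Real.rpow_natCast, mul_pow, mul_pow _ _ k, ← pow_mul, ← pow_mul, mul_comm k d]
    congr 1
    field_simp
  calc ∫⁻ y, g y * ENNReal.ofReal ((t ^ d)⁻¹ * (1 + ‖x - y‖ / t) ^ (-a)) ∂μ
      ≤ ∫⁻ y, ∑' k : ℕ, ENNReal.ofReal ((t ^ d)⁻¹) * (ENNReal.ofReal (2 ^ a * (2 ^ (-a)) ^ k) *
          (Metric.ball x (2 ^ k * t)).indicator g y) ∂μ := by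
        refine lintegral_mono fun y => ?_
        rw [ENNReal.tsum_mul_left, ENNReal.ofReal_mul (by positivity), mul_left_comm]
        gcongr
        exact mul_one_add_norm_div_rpow_neg_le_tsum_indicator (d.cast_nonneg.trans ha.le) ht g x y
    _ = ∑' k : ℕ, ENNReal.ofReal ((t ^ d)⁻¹) * (ENNReal.ofReal (2 ^ a * (2 ^ (-a)) ^ k) *
          ∫⁻ y in Metric.ball x (2 ^ k * t), g y ∂μ) := by
        rw [lintegral_tsum fun k => ((hg.indicator measurableSet_ball).const_mul _).const_mul _]
        refine tsum_congr fun k => ?_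
        rw [lintegral_const_mul' _ _ ENNReal.ofReal_ne_top,
          lintegral_const_mul' _ _ ENNReal.ofReal_ne_top, lintegral_indicator measurableSet_ball]
    _ ≤ ∑' k : ℕ, ENNReal.ofReal ((t ^ d)⁻¹) * (ENNReal.ofReal (2 ^ a * (2 ^ (-a)) ^ k) *
          (A * (ENNReal.ofReal ((2 ^ k * t) ^ d) * μ (Metric.ball 0 1)))) := by
        gcongr with k
        rw [hd, ← μ.addHaar_ball_of_pos x (by positivity)]
        exact hA _ (by positivity)
    _ = _ := by
        rw [ENNReal.coe_mul, ENNReal.coe_mul, hB, hS, ← ENNReal.tsum_mul_left,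
          ← ENNReal.tsum_mul_right]
        refine tsum_congr fun k => ?_
        rw [mul_right_comm _ (μ _), ← ENNReal.ofReal, ← hscale]
        ring

end MaximalFunction

lemma setLIntegral_ball_enorm_le_uncenteredMaximal {n : ℕ} (f : EuclideanSpace ℝ (Fin n) → ℂ)
    (x : EuclideanSpace ℝ (Fin n)) {r : ℝ} (hr : 0 < r) :
    ∫⁻ y in Metric.ball x r, ‖f y‖ₑ ≤
      uncenteredMaximal n f x * volume (Metric.ball x r) := by
  rw [← ENNReal.div_le_iff (Metric.measure_ball_pos volume x hr).ne' measure_ball_lt_top.ne]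
  exact le_iSup_of_le x <| le_iSup_of_le r <| le_iSup_of_le hr <|
    le_iSup_of_le (Metric.mem_ball_self hr) le_rfl

section WeightedL1

lemma ofReal_one_add_norm_rpow_le_mul {V : Type*} [SeminormedAddGroup V] {b : ℝ} (hb : 0 ≤ b)
    (v w : V) :
    ENNReal.ofReal ((1 + ‖v‖) ^ b) ≤
      ENNReal.ofReal ((1 + ‖v + w‖) ^ b) * ENNReal.ofReal ((1 + ‖w‖) ^ b) := by
  rw [← ENNReal.ofReal_mul (by positivity), ← Real.mul_rpow (by positivity) (by positivity)]
  gcongr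
  have hsub : ‖v‖ ≤ ‖v + w‖ + ‖w‖ := by
    simpa only [add_sub_cancel_right] using norm_sub_le (v + w) w
  nlinarith [norm_nonneg (v + w), norm_nonneg w]

variable {V : Type*} [NormedAddCommGroup V] [InnerProductSpace ℝ V] [FiniteDimensional ℝ V]
  [MeasurableSpace V] [BorelSpace V] {b : ℝ}

/-- The norm of `U` in the weighted space `L¹((1 + ‖v‖) ^ b)`, as an extended nonnegative real.
For `0 ≤ b` and `U` a Fourier transform, this is the norm of a Beurling algebra. -/
noncomputable def weightedL1Norm (b : ℝ) (U : V → ℂ) : ℝ≥0∞ :=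
  ∫⁻ v, ‖U v‖ₑ * ENNReal.ofReal ((1 + ‖v‖) ^ b)

lemma integrable_of_weightedL1Norm_ne_top (hb : 0 ≤ b) {U : V → ℂ}
    (hU : AEStronglyMeasurable U) (h : weightedL1Norm b U ≠ ⊤) : Integrable U := by
  refine ⟨hU, lt_of_le_of_lt (lintegral_mono fun v => ?_) h.lt_top⟩
  refine le_mul_of_one_le_right' (ENNReal.one_le_ofReal.2 (Real.one_le_rpow ?_ hb))
  exact le_add_of_nonneg_right (norm_nonneg v)

lemma weightedL1Norm_fourier_mul_fourier_le (hb : 0 ≤ b) {u U : V → ℂ} (hu : Integrable u)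
    (hU : Integrable U) :
    weightedL1Norm b (𝓕 fun x => u x * 𝓕 U x) ≤
      weightedL1Norm b (𝓕 u) * weightedL1Norm b U := by
  have hmeasu : Measurable (𝓕 u) := (continuous_fourier hu).measurable
  have hmeasU : AEMeasurable fun w => ‖U w‖ₑ * ENNReal.ofReal ((1 + ‖w‖) ^ b) :=
    hU.aestronglyMeasurable.enorm.mul (by fun_prop)
  calc weightedL1Norm b (𝓕 fun x => u x * 𝓕 U x)
      ≤ ∫⁻ v, ∫⁻ w, (‖𝓕 u (v + w)‖ₑ * ENNReal.ofReal ((1 + ‖v + w‖) ^ b)) *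
          (‖U w‖ₑ * ENNReal.ofReal ((1 + ‖w‖) ^ b)) := by
        refine lintegral_mono fun v => ?_
        rw [fourier_mul_fourier hu hU]
        grw [enorm_integral_le_lintegral_enorm, ← lintegral_mul_const' _ _ ENNReal.ofReal_ne_top]
        refine lintegral_mono fun w => ?_
        simp only
        grw [ofReal_one_add_norm_rpow_le_mul hb v w, enorm_mul, mul_mul_mul_comm]
    _ = ∫⁻ w, ∫⁻ v, (‖𝓕 u (v + w)‖ₑ * ENNReal.ofReal ((1 + ‖v + w‖) ^ b)) *
          (‖U w‖ₑ * ENNReal.ofReal ((1 + ‖w‖) ^ b)) := by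
        refine lintegral_lintegral_swap (AEMeasurable.mul ?_ hmeasU.comp_snd)
        exact Measurable.aemeasurable (by fun_prop)
    _ = ∫⁻ w, weightedL1Norm b (𝓕 u) * (‖U w‖ₑ * ENNReal.ofReal ((1 + ‖w‖) ^ b)) := by
        refine lintegral_congr fun w => ?_
        rw [lintegral_mul_const _ (by fun_prop), lintegral_add_right_eq_self
          (fun v => ‖𝓕 u v‖ₑ * ENNReal.ofReal ((1 + ‖v‖) ^ b)), weightedL1Norm]
    _ = weightedL1Norm b (𝓕 u) * weightedL1Norm b U :=
        lintegral_const_mul'' _ hmeasU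

lemma weightedL1Norm_schwartzMap_ne_top (b : ℝ) (g : SchwartzMap V ℂ) :
    weightedL1Norm b g ≠ ⊤ := by
  set N := ⌈b⌉₊
  have hint : Integrable fun v => 2 ^ (N - 1) * (‖g v‖ + ‖v‖ ^ N * ‖g v‖) :=
    (g.integrable.norm.add (g.integrable_pow_mul volume N)).const_mul _
  refine (lt_of_le_of_lt (lintegral_mono fun v => ?_) hint.lintegral_lt_top).ne
  have hone : 1 ≤ 1 + ‖v‖ := le_add_of_nonneg_right (norm_nonneg v)
  rw [← ofReal_norm, ← ENNReal.ofReal_mul (norm_nonneg _)]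
  refine ENNReal.ofReal_le_ofReal ?_
  calc ‖g v‖ * (1 + ‖v‖) ^ b ≤ ‖g v‖ * (1 + ‖v‖) ^ N := by
        rw [← Real.rpow_natCast]
        gcongr
        exact Nat.le_ceil b
    _ ≤ ‖g v‖ * (2 ^ (N - 1) * (1 ^ N + ‖v‖ ^ N)) := by
        gcongr
        exact add_pow_le zero_le_one (norm_nonneg v) N
    _ = 2 ^ (N - 1) * (‖g v‖ + ‖v‖ ^ N * ‖g v‖) := by ring

lemma one_add_norm_rpow_le_two_rpow_mul {W : Type*} [NormedAddCommGroup W] (hb : 0 ≤ b) (w : W) :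
    (1 + ‖w‖) ^ b ≤ 2 ^ (b / 2) * (1 + ‖w‖ ^ 2) ^ (b / 2) := by
  refine (Real.rpow_le_rpow (by positivity) (one_add_norm_le_sqrt_two_mul_sqrt w) hb).trans_eq ?_
  rw [← Real.sqrt_mul zero_le_two, Real.sqrt_eq_rpow, ← Real.rpow_mul (by positivity),
    ← Real.mul_rpow zero_le_two (by positivity)]
  ring_nf

lemma exists_weightedL1Norm_le_mul_lintegral_rpow {s : ℝ} (hb : 0 ≤ b)
    (hbs : b + Module.finrank ℝ V / 2 < s) :
    ∃ C : ℝ≥0, ∀ U : V → ℂ, AEStronglyMeasurable U → weightedL1Norm b U ≤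
      C * (∫⁻ v, ENNReal.ofReal ((1 + ‖v‖ ^ 2) ^ s) * ‖U v‖ₑ ^ 2) ^ (1 / 2 : ℝ) := by
  set w : V → ℝ≥0∞ := fun v => ENNReal.ofReal (2 ^ (b / 2) * (1 + ‖v‖ ^ 2) ^ ((b - s) / 2))
  have hw_sq (v : V) : w v ^ (2 : ℝ) =
      ENNReal.ofReal (2 ^ b * (1 + ‖v‖ ^ 2) ^ (-(2 * (s - b)) / 2)) := by
    rw [ENNReal.ofReal_rpow_of_nonneg (by positivity) zero_le_two,
      Real.mul_rpow (by positivity) (by positivity), ← Real.rpow_mul zero_le_two,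
      ← Real.rpow_mul (by positivity)]
    ring_nf
  have hfinite : (∫⁻ v, w v ^ (2 : ℝ)) ^ (1 / 2 : ℝ) ≠ ⊤ := by
    have h := (integrable_rpow_neg_one_add_norm_sq (E := V) (μ := volume) (r := 2 * (s - b))
      (by linarith)).const_mul (2 ^ b)
    simp_rw [hw_sq]
    exact ENNReal.rpow_ne_top_of_nonneg (by positivity) h.lintegral_lt_top.ne
  have hweight (v : V) : ENNReal.ofReal ((1 + ‖v‖) ^ b) ≤
      w v * ENNReal.ofReal ((1 + ‖v‖ ^ 2) ^ (s / 2)) := by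
    rw [← ENNReal.ofReal_mul (by positivity), mul_assoc, ← Real.rpow_add (by positivity),
      show (b - s) / 2 + s / 2 = b / 2 by ring]
    exact ENNReal.ofReal_le_ofReal (one_add_norm_rpow_le_two_rpow_mul hb v)
  refine ⟨((∫⁻ v, w v ^ (2 : ℝ)) ^ (1 / 2 : ℝ)).toNNReal, fun U hU => ?_⟩
  rw [ENNReal.coe_toNNReal hfinite]
  calc weightedL1Norm b U
      ≤ ∫⁻ v, w v * (ENNReal.ofReal ((1 + ‖v‖ ^ 2) ^ (s / 2)) * ‖U v‖ₑ) := by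
        refine lintegral_mono fun v => ?_
        grw [hweight v, mul_comm, mul_assoc]
    _ ≤ (∫⁻ v, w v ^ (2 : ℝ)) ^ (1 / 2 : ℝ) *
          (∫⁻ v, (ENNReal.ofReal ((1 + ‖v‖ ^ 2) ^ (s / 2)) * ‖U v‖ₑ) ^ (2 : ℝ)) ^ (1 / 2 : ℝ) :=
        ENNReal.lintegral_mul_le_Lp_mul_Lq volume Real.HolderConjugate.two_two (by fun_prop)
          (by fun_prop)
    _ = _ := by
        simp only [ENNReal.mul_rpow_of_nonneg _ _ zero_le_two, ENNReal.rpow_two]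
        congr! 5 with v
        rw [← ENNReal.ofReal_pow (by positivity), ← Real.rpow_mul_natCast (by positivity)]
        push_cast
        rw [div_mul_cancel₀ _ two_ne_zero]

lemma sobolevW2_eq_lintegral_fourier (s : ℝ) (F : ℝ → ℂ) :
    sobolevW2 s F = (∫⁻ θ : ℝ, ENNReal.ofReal ((1 + ‖θ‖ ^ 2) ^ s) *
      ‖𝓕 F ((2 * π)⁻¹ * θ)‖ₑ ^ 2) ^ (1 / 2 : ℝ) := by
  unfold sobolevW2
  congr! 6 with θ
  · rw [Real.norm_eq_abs, sq_abs]
  · rw [← enorm_eq_nnnorm, Real.fourier_real_eq]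
    congr 2 with l
    rw [Circle.smul_def, Real.fourierChar_apply, smul_eq_mul, mul_comm]
    congr 2
    push_cast
    field_simp

lemma exists_weightedL1Norm_fourier_le_sobolevW2 {s : ℝ} (hb : 0 ≤ b) (hbs : b + 1 / 2 < s) :
    ∃ C : ℝ≥0, ∀ F : ℝ → ℂ, Integrable F → weightedL1Norm b (𝓕 F) ≤ C * sobolevW2 s F := by
  obtain ⟨C, hC⟩ := exists_weightedL1Norm_le_mul_lintegral_rpow (V := ℝ) hb (s := s)
    (by simpa using hbs)
  refine ⟨(2 * π)⁻¹.toNNReal * C, fun F hF => ?_⟩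
  have hcont : Continuous (𝓕 F) := continuous_fourier hF
  set U : ℝ → ℂ := fun θ => 𝓕 F ((2 * π)⁻¹ * θ) with hU
  have hmap : ENNReal.ofReal (2 * π)⁻¹ • (volume : Measure ℝ) =
      Measure.map (2 * π * ·) volume := by
    rw [Real.map_volume_mul_left Real.two_pi_pos.ne', abs_of_pos (by positivity)]
  calc weightedL1Norm b (𝓕 F)
      ≤ ∫⁻ τ : ℝ, ‖U (2 * π * τ)‖ₑ * ENNReal.ofReal ((1 + ‖2 * π * τ‖) ^ b) := by
        refine lintegral_mono fun τ => ?_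
        simp only [hU, inv_mul_cancel_left₀ Real.two_pi_pos.ne']
        gcongr
        rw [norm_mul, Real.norm_of_nonneg Real.two_pi_pos.le]
        exact le_mul_of_one_le_left (norm_nonneg τ) (by linarith [Real.two_le_pi])
    _ = ENNReal.ofReal (2 * π)⁻¹ * weightedL1Norm b U := by
        rw [weightedL1Norm, ← smul_eq_mul (ENNReal.ofReal (2 * π)⁻¹), ← lintegral_smul_measure,
          hmap, lintegral_map (by fun_prop) (by fun_prop)]
    _ ≤ ENNReal.ofReal (2 * π)⁻¹ * (C * sobolevW2 s F) := by
        rw [sobolevW2_eq_lintegral_fourier]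
        gcongr
        exact hC U (Continuous.aestronglyMeasurable (by fun_prop))
    _ = _ := by rw [ENNReal.coe_mul, mul_assoc, ENNReal.ofReal]

end WeightedL1

section RadialMultiplier

variable {V : Type*} [NormedAddCommGroup V] [InnerProductSpace ℝ V] [FiniteDimensional ℝ V]
  [MeasurableSpace V] [BorelSpace V]

/-- The Fourier multiplier operator with radial symbol `ξ ↦ k ‖ξ‖` applied to `f`. In the present
normalization of the Fourier transform it is `k (√(-Δ) / (2 * π))`. -/
noncomputable def radialMultiplier (k : ℝ → ℂ) (f : V → ℂ) : V → ℂ :=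
  𝓕⁻ fun ξ => k ‖ξ‖ * 𝓕 f ξ

lemma radialMultiplier_congr {k k' : ℝ → ℂ} (h : Set.EqOn k k' (Set.Ici 0)) (f : V → ℂ) :
    radialMultiplier k f = radialMultiplier k' f := by
  unfold radialMultiplier
  simp only [h (norm_nonneg _)]

lemma radialMultiplier_eq_integral (k : ℝ → ℂ) (f : V → ℂ) (x : V) :
    radialMultiplier k f x = ∫ ξ, k ‖ξ‖ * 𝓕 f ξ * cexp (2 * π * I * (⟪x, ξ⟫ : ℝ)) := by
  rw [radialMultiplier, Real.fourierInv_eq']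
  refine integral_congr_ae (ae_of_all _ fun ξ => ?_)
  simp only [smul_eq_mul, real_inner_comm ξ x]
  rw [mul_comm]
  congr 2
  push_cast
  ring

lemma radialMultiplier_eq_integral_fourier_mul {k : ℝ → ℂ} (hk : Integrable fun ξ : V => k ‖ξ‖)
    {f : V → ℂ} (hf : Integrable f) (x : V) :
    radialMultiplier k f x = ∫ y, 𝓕 (fun ξ : V => k ‖ξ‖) (y - x) * f y := by
  rw [radialMultiplier, Real.fourierInv_eq_fourier_neg, fourier_mul_fourier hk hf]
  simp only [neg_add_eq_sub]

lemma exists_enorm_radialMultiplier_cexp_le {n : ℕ} {a : ℝ} (ha : n < a) (ha' : a ≤ n + 1) :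
    ∃ C : ℝ≥0, ∀ f : EuclideanSpace ℝ (Fin n) → ℂ, Integrable f → ∀ t : ℝ, 0 < t → ∀ (θ : ℝ) x,
      ‖radialMultiplier (fun l => cexp (-(t * (1 - θ * I)) * l)) f x‖ₑ ≤
        C * ENNReal.ofReal ((1 + |θ|) ^ (a - ((n : ℝ) - 1) / 2)) * uncenteredMaximal n f x := by
  have hd : Module.finrank ℝ (EuclideanSpace ℝ (Fin n)) = n := finrank_euclideanSpace_fin
  obtain ⟨C, hC⟩ := exists_lintegral_mul_one_add_norm_div_rpow_neg_le
    (volume : Measure (EuclideanSpace ℝ (Fin n))) (hd.symm ▸ ha)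
  set K := poissonConst n * 2 ^ ((n : ℝ) + 1)
  have hK : 0 < K := mul_pos (poissonConst_pos n) (by positivity)
  refine ⟨K.toNNReal * C, fun f hf t ht θ x => ?_⟩
  have hint := integrable_cexp_neg_mul_norm (V := EuclideanSpace ℝ (Fin n))
    (z := t * (1 - θ * I)) (by simpa using ht)
  set T := (1 + |θ|) ^ (a - ((n : ℝ) - 1) / 2)
  have hT : 0 < T := by positivity
  rw [radialMultiplier_eq_integral_fourier_mul hint hf]
  refine (enorm_integral_le_lintegral_enorm _).trans ?_
  calc _ ≤ ∫⁻ y, ENNReal.ofReal (K * T) *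
          (‖f y‖ₑ * ENNReal.ofReal ((t ^ n)⁻¹ * (1 + ‖x - y‖ / t) ^ (-a))) := by
        refine lintegral_mono fun y => ?_
        have hkernel := norm_fourier_exp_neg_mul_norm_le (V := EuclideanSpace ℝ (Fin n))
          (n.cast_nonneg.trans ha.le) (by rwa [hd]) (y - x) ht θ
        rw [hd, norm_sub_rev] at hkernel
        simp only
        rw [enorm_mul, mul_comm, mul_left_comm, ← ENNReal.ofReal_mul (mul_nonneg hK.le hT.le)]
        gcongr
        rw [← ofReal_norm]
        exact ENNReal.ofReal_le_ofReal hkernel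
    _ ≤ ENNReal.ofReal (K * T) * (C * uncenteredMaximal n f x) := by
        rw [lintegral_const_mul' _ _ ENNReal.ofReal_ne_top]
        gcongr
        simpa only [hd] using hC _ _ x hf.aestronglyMeasurable.enorm
          (fun r hr => setLIntegral_ball_enorm_le_uncenteredMaximal f x hr) t ht
    _ = ((K.toNNReal * C : ℝ≥0) : ℝ≥0∞) * ENNReal.ofReal T * uncenteredMaximal n f x := by
        rw [ENNReal.ofReal_mul hK.le, ENNReal.coe_mul, ENNReal.ofReal]
        ring

lemma ae_eq_integral_fourier_mul_cexp [Nontrivial V] {h : ℝ → ℂ} (hh : Integrable h)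
    (hh' : Integrable (𝓕 h)) {t : ℝ} (ht : 0 < t) :
    ∀ᵐ ξ : V, h (t * ‖ξ‖) * cexp (-(t * ‖ξ‖ : ℝ)) =
      ∫ τ, 𝓕 h τ * cexp (-(t * (1 - (2 * π * τ : ℝ) * I)) * ‖ξ‖) := by
  have hdilate := Measure.quasiMeasurePreserving_smul (volume : Measure ℝ) ht.ne'
  have hinv := (hdilate.comp (quasiMeasurePreserving_norm (volume : Measure V))).ae
    (ae_fourierInv_fourier_eq hh hh')
  filter_upwards [hinv] with ξ hξ
  simp only [Function.comp_apply, smul_eq_mul] at hξ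
  rw [← hξ, Real.fourierInv_eq', ← integral_mul_const]
  refine integral_congr_ae (ae_of_all _ fun τ => ?_)
  simp only [smul_eq_mul, mul_right_comm _ (𝓕 h τ), ← Complex.exp_add]
  rw [mul_comm]
  congr 2
  simp only [RCLike.inner_apply, conj_trivial]
  push_cast
  ring

lemma integrable_fourier_mul_cexp_mul_fourier {h : ℝ → ℂ} (hh' : Integrable (𝓕 h)) {f : V → ℂ}
    (hf : Integrable f) {t : ℝ} (ht : 0 < t) :
    Integrable (Function.uncurry fun (ξ : V) τ =>
      𝓕 h τ * (cexp (-(t * (1 - (2 * π * τ : ℝ) * I)) * ‖ξ‖) * 𝓕 f ξ))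
      (volume.prod volume) := by
  have hdamped : Integrable fun ξ : V => rexp (-t * ‖ξ‖) * ‖𝓕 f ξ‖ :=
    (integrable_exp_neg_mul_norm ht).mul_bdd (c := ∫ y, ‖f y‖)
      (continuous_fourier hf).norm.aestronglyMeasurable (ae_of_all _ fun ξ => by
        rw [norm_norm]
        exact VectorFourier.norm_fourierIntegral_le_integral_norm _ _ _ _ _)
  refine (hdamped.mul_prod hh'.norm).mono' ?_ (ae_of_all _ fun p => ?_)
  · have hcont : Continuous fun p : V × ℝ =>
        cexp (-(t * (1 - (2 * π * p.2 : ℝ) * I)) * ‖p.1‖) * 𝓕 f p.1 := by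
      have := continuous_fourier hf
      fun_prop
    exact hh'.aestronglyMeasurable.comp_snd.mul hcont.aestronglyMeasurable
  · simp only [Function.uncurry, norm_mul (𝓕 h _), norm_mul (cexp _), norm_cexp_neg_mul_ofReal]
    simp [mul_comm]

lemma radialMultiplier_mul_cexp_eq_integral [Nontrivial V] {h : ℝ → ℂ} (hh : Integrable h)
    (hh' : Integrable (𝓕 h)) {f : V → ℂ} (hf : Integrable f) {t : ℝ} (ht : 0 < t) (x : V) :
    radialMultiplier (fun l => h (t * l) * cexp (-(t * l : ℝ))) f x =
      ∫ τ, 𝓕 h τ *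
        radialMultiplier (fun l => cexp (-(t * (1 - (2 * π * τ : ℝ) * I)) * l)) f x := by
  have hsymbol : (fun ξ : V => h (t * ‖ξ‖) * cexp (-(t * ‖ξ‖ : ℝ)) * 𝓕 f ξ) =ᵐ[volume] fun ξ =>
      ∫ τ, 𝓕 h τ * (cexp (-(t * (1 - (2 * π * τ : ℝ) * I)) * ‖ξ‖) * 𝓕 f ξ) := by
    filter_upwards [ae_eq_integral_fourier_mul_cexp (V := V) hh hh' ht] with ξ hξ
    simp only [hξ, ← integral_mul_const, mul_assoc]
  rw [radialMultiplier, Real.fourierInv_congr_ae hsymbol, Real.fourierInv_eq_fourier_neg,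
    fourier_integral_right (integrable_fourier_mul_cexp_mul_fourier hh' hf ht)]
  refine integral_congr_ae (ae_of_all _ fun τ => ?_)
  simp only [radialMultiplier, Real.fourierInv_eq_fourier_neg]
  exact congrFun (VectorFourier.fourierIntegral_const_smul _ _ _ _ _) (-x)

lemma exists_enorm_radialMultiplier_mul_cexp_le {n : ℕ} (hn : 1 ≤ n) {a : ℝ} (ha : n < a)
    (ha' : a ≤ n + 1) :
    ∃ C : ℝ≥0, ∀ h : ℝ → ℂ, Integrable h → weightedL1Norm (a - ((n : ℝ) - 1) / 2) (𝓕 h) ≠ ⊤ →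
      ∀ f : EuclideanSpace ℝ (Fin n) → ℂ, Integrable f → ∀ t : ℝ, 0 < t → ∀ x,
        ‖radialMultiplier (fun l => h (t * l) * cexp (-(t * l : ℝ))) f x‖ₑ ≤
          C * weightedL1Norm (a - ((n : ℝ) - 1) / 2) (𝓕 h) * uncenteredMaximal n f x := by
  obtain ⟨C, hC⟩ := exists_enorm_radialMultiplier_cexp_le ha ha'
  have : Nontrivial (EuclideanSpace ℝ (Fin n)) :=
    Module.nontrivial_of_finrank_pos (R := ℝ) (by rw [finrank_euclideanSpace_fin]; exact hn)
  set b := a - ((n : ℝ) - 1) / 2 with hb_def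
  have hb : 0 ≤ b := by rw [hb_def]; linarith
  refine ⟨C * ((2 * π) ^ b).toNNReal, fun h hh hw f hf t ht x => ?_⟩
  have hh' : Integrable (𝓕 h) := integrable_of_weightedL1Norm_ne_top hb
    (continuous_fourier hh).aestronglyMeasurable hw
  have hweight (τ : ℝ) : ENNReal.ofReal ((1 + |2 * π * τ|) ^ b) ≤
      ENNReal.ofReal ((2 * π) ^ b) * ENNReal.ofReal ((1 + ‖τ‖) ^ b) := by
    rw [← ENNReal.ofReal_mul (by positivity), ← Real.mul_rpow (by positivity) (by positivity),
      abs_mul, abs_of_pos Real.two_pi_pos, Real.norm_eq_abs]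
    gcongr
    linarith [Real.two_le_pi]
  rw [radialMultiplier_mul_cexp_eq_integral hh hh' hf ht]
  calc _ ≤ ∫⁻ τ, ‖𝓕 h τ *
          radialMultiplier (fun l => cexp (-(t * (1 - (2 * π * τ : ℝ) * I)) * l)) f x‖ₑ :=
        enorm_integral_le_lintegral_enorm _
    _ ≤ ∫⁻ τ, C * ENNReal.ofReal ((2 * π) ^ b) * uncenteredMaximal n f x *
          (‖𝓕 h τ‖ₑ * ENNReal.ofReal ((1 + ‖τ‖) ^ b)) := by
        refine lintegral_mono fun τ => ?_
        simp only [enorm_mul]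
        grw [hC f hf t ht (2 * π * τ) x, hweight τ]
        exact le_of_eq (by ring)
    _ = _ := by
        rw [lintegral_const_mul _ (by have := continuous_fourier hh; fun_prop), weightedL1Norm,
          ENNReal.coe_mul, ENNReal.ofReal.eq_def ((2 * π) ^ b)]
        ring

lemma exists_schwartzMap_eqOn_closedBall {E : Type*} [NormedAddCommGroup E]
    [NormedSpace ℝ E] [FiniteDimensional ℝ E] {u : E → ℂ} (hu : ContDiff ℝ (⊤ : ℕ∞) u)
    (R : ℝ) :
    ∃ g : SchwartzMap E ℂ, Set.EqOn g u (Metric.closedBall 0 R) := by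
  let χ : ContDiffBump (0 : E) := ⟨|R| + 1, |R| + 2, by positivity, by linarith⟩
  have hsupp : HasCompactSupport fun v => (χ v : ℂ) * u v :=
    (χ.hasCompactSupport.comp_left (g := ofReal) ofReal_zero).mul_right
  refine ⟨hsupp.toSchwartzMap ((ofRealCLM.contDiff.comp χ.contDiff).mul hu), fun v hv => ?_⟩
  have hone : χ v = 1 := χ.one_of_mem_closedBall
    (Metric.closedBall_subset_closedBall ((le_abs_self R).trans (le_add_of_nonneg_right
      zero_le_one)) hv)
  change (χ v : ℂ) * u v = u v
  rw [hone, ofReal_one, one_mul]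

lemma exists_weightedL1Norm_fourier_mul_schwartzMap_le_sobolevW2 {b s : ℝ} (hb : 0 ≤ b)
    (hbs : b + 1 / 2 < s) (g : SchwartzMap ℝ ℂ) :
    ∃ C : ℝ≥0, ∀ F : ℝ → ℂ, Integrable F →
      weightedL1Norm b (𝓕 fun l => F l * g l) ≤ C * sobolevW2 s F := by
  obtain ⟨C, hC⟩ := exists_weightedL1Norm_fourier_le_sobolevW2 hb hbs
  let U : SchwartzMap ℝ ℂ := 𝓕⁻ g
  have hU : 𝓕 (U : ℝ → ℂ) = g := by
    rw [← SchwartzMap.fourier_coe, FourierTransform.fourier_fourierInv_eq]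
  refine ⟨C * (weightedL1Norm b U).toNNReal, fun F hF => ?_⟩
  rw [ENNReal.coe_mul, ENNReal.coe_toNNReal (weightedL1Norm_schwartzMap_ne_top b U),
    mul_right_comm, ← hU]
  grw [weightedL1Norm_fourier_mul_fourier_le hb hF U.integrable, hC F hF]

lemma eqOn_mul_mul_cexp_neg {m g : ℝ → ℂ} {R : ℝ} (hm : ∀ l, R < l → m l = 0)
    (hg : Set.EqOn g (fun l : ℝ => cexp l) (Metric.closedBall 0 R)) :
    Set.EqOn m (fun l => m l * g l * cexp (-l)) (Set.Ici 0) := fun l hl => by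
  rcases lt_or_ge R l with hlR | hlR
  · simp only [hm l hlR, zero_mul]
  · have hgl := hg (mem_closedBall_zero_iff.2 ((Real.norm_of_nonneg hl).trans_le hlR))
    simp only [hgl, mul_assoc, ← Complex.exp_add, add_neg_cancel, Complex.exp_zero, mul_one]

end RadialMultiplier

lemma integrable_of_norm_le_of_eq_zero_of_lt_abs {E : Type*} [NormedAddCommGroup E] {m : ℝ → E}
    (hm : AEStronglyMeasurable m) {M R : ℝ} (hM : ∀ l, ‖m l‖ ≤ M) (hR : ∀ l, R < |l| → m l = 0) :
    Integrable m := by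
  have hon : IntegrableOn m (Set.Icc (-R) R) :=
    Measure.integrableOn_of_bounded (M := M) measure_Icc_lt_top.ne hm (ae_of_all _ hM)
  refine (integrableOn_iff_integrable_of_support_subset fun l hl => ?_).1 hon
  exact abs_le.1 (not_lt.1 fun hlt => hl (hR l hlt))

theorem multiplier_pointwise_maximal_bound_general (n : ℕ) (hn : 1 ≤ n) (s : ℝ)
    (hs : (n : ℝ) / 2 + 1 < s) (R : ℝ) :
    ∃ C : ℝ, 0 < C ∧ ∀ m : ℝ → ℂ, Integrable m → (∀ l : ℝ, R < l → m l = 0) →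
      sobolevW2 s m < ⊤ → ∀ f : EuclideanSpace ℝ (Fin n) → ℂ, Integrable f → ∀ t : ℝ, 0 < t →
        ∀ x : EuclideanSpace ℝ (Fin n),
          ENNReal.ofReal ‖∫ ξ : EuclideanSpace ℝ (Fin n),
              m (t * ‖ξ‖) * 𝓕 f ξ * cexp (2 * π * I * (⟪x, ξ⟫ : ℝ))‖
            ≤ ENNReal.ofReal C * sobolevW2 s m * uncenteredMaximal n f x := by
  obtain ⟨a, hna, ha⟩ : ∃ a, (n : ℝ) < a ∧ a < min (n + 1 : ℝ) (s + n / 2 - 1) :=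
    exists_between (lt_min (lt_add_one _) (by linarith))
  obtain ⟨han, has⟩ := lt_min_iff.1 ha
  have hexp : ContDiff ℝ (⊤ : ℕ∞) fun l : ℝ => cexp l := ofRealCLM.contDiff.cexp
  obtain ⟨g, hg⟩ := exists_schwartzMap_eqOn_closedBall hexp R
  obtain ⟨C₁, hC₁⟩ := exists_enorm_radialMultiplier_mul_cexp_le hn hna han.le
  obtain ⟨C₂, hC₂⟩ := exists_weightedL1Norm_fourier_mul_schwartzMap_le_sobolevW2
    (b := a - ((n : ℝ) - 1) / 2) (s := s) (by linarith) (by linarith) g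
  refine ⟨C₁ * C₂ + 1, by positivity, fun m hm hsupp hsob f hf t ht x => ?_⟩
  have hm_eq : Set.EqOn (fun l => m (t * l))
      (fun l => m (t * l) * g (t * l) * cexp (-(t * l : ℝ))) (Set.Ici 0) :=
    fun l hl => eqOn_mul_mul_cexp_neg hsupp hg (mul_nonneg ht.le hl)
  have hmg : Integrable fun l => m l * g l := hm.mul_bdd g.continuous.aestronglyMeasurable
    (ae_of_all _ g.toBoundedContinuousFunction.norm_coe_le_norm)
  have hfin := ((hC₂ m hm).trans_lt (ENNReal.mul_lt_top ENNReal.coe_lt_top hsob)).ne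
  rw [← radialMultiplier_eq_integral (fun l => m (t * l)), radialMultiplier_congr hm_eq,
    ofReal_norm]
  refine (hC₁ _ hmg hfin f hf t ht x).trans ?_
  grw [hC₂ m hm, ← mul_assoc]
  gcongr
  rw [← ENNReal.coe_mul, ← ENNReal.ofReal_coe_nnreal]
  exact ENNReal.ofReal_le_ofReal (by simp)

theorem multiplier_pointwise_maximal_bound (n : ℕ) (hn : 1 ≤ n) (s : ℝ)
    (hs : (n : ℝ) + 1 / 2 < s) :
    ∃ C : ℝ, 0 < C ∧ ∀ m : ℝ → ℂ, Measurable m → (∃ M : ℝ, ∀ l : ℝ, ‖m l‖ ≤ M) →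
      (∀ l : ℝ, 2 < |l| → m l = 0) → sobolevW2 s m < ⊤ →
      ∀ f : SchwartzMap (EuclideanSpace ℝ (Fin n)) ℂ, ∀ t : ℝ, 0 < t →
        ∀ x : EuclideanSpace ℝ (Fin n),
          ENNReal.ofReal ‖∫ ξ : EuclideanSpace ℝ (Fin n),
              m (t * ‖ξ‖) * 𝓕 (⇑f) ξ * Complex.exp (2 * Real.pi * Complex.I * (⟪x, ξ⟫ : ℝ))‖
            ≤ ENNReal.ofReal C * sobolevW2 s m * uncenteredMaximal n (⇑f) x := by
  have hn' : (1 : ℝ) ≤ n := Nat.one_le_cast.2 hn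
  obtain ⟨C, hC, hbound⟩ := multiplier_pointwise_maximal_bound_general n hn s (by linarith) 2
  exact ⟨C, hC, fun m hm ⟨_, hM⟩ hsupp hsob f => hbound m
    (integrable_of_norm_le_of_eq_zero_of_lt_abs hm.aestronglyMeasurable hM hsupp)
    (fun l hl => hsupp l (hl.trans_le (le_abs_self l))) hsob f f.integrable⟩
end
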